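/- Let ν be the standard Gaussian measure on ℝ^d and B₁, ..., B_K a measurable partition with ν(B_i) = 1/K for all i, where K ≥ 5. Then for every η ≥ 1, ν({z : dist(z, complement of its own cell) ≤ η}) ≥ 1 - √(π/2)·e^{-η²/2}·e^{-η·√(log(K²/(4π log K)))}. -/

import Mathlib

open Real Set MeasureTheory ProbabilityTheory

/-- The standard normal cumulative distribution function. -/
noncomputable def Phi (x : ℝ) : ℝ :=
  (Real.sqrt (2 * π))⁻¹ * ∫ u in Set.Iic x, Real.exp (-u ^ 2 / 2)

/-- The inverse of the standard normal cdf. -/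
noncomputable def PhiInv : ℝ → ℝ := Function.invFun Phi

/-- The standard Gaussian measure `N(0, I_d)` on `ℝ^d`. -/
noncomputable def stdGaussian (d : ℕ) : Measure (Fin d → ℝ) :=
  Measure.pi fun _ => gaussianReal 0 1

/-- The Euclidean (ℓ₂) norm on `ℝ^d`. -/
noncomputable def l2 {d : ℕ} (z : Fin d → ℝ) : ℝ := Real.sqrt (∑ i, z i ^ 2)

/-- The ℓ₂ distance from a point to a set. -/
noncomputable def distSet {d : ℕ} (z : Fin d → ℝ) (A : Set (Fin d → ℝ)) : ℝ :=
  sInf {t | ∃ z' ∈ A, t = l2 (z - z')}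

open Filter Topology

/-- The standard normal density. -/
noncomputable def gaussPdf (x : ℝ) : ℝ := (Real.sqrt (2 * π))⁻¹ * Real.exp (-x ^ 2 / 2)

lemma gaussPdf_pos (x : ℝ) : 0 < gaussPdf x := by
  unfold gaussPdf; positivity

lemma gaussPdf_neg (x : ℝ) : gaussPdf (-x) = gaussPdf x := by
  simp [gaussPdf]

lemma gaussPdf_le_one (x : ℝ) : gaussPdf x ≤ 1 := by
  have h1 : (Real.sqrt (2 * π))⁻¹ ≤ 1 :=
    inv_le_one_of_one_le₀ (Real.one_le_sqrt.2 (by linarith [Real.pi_gt_three]))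
  have h2 : Real.exp (-x ^ 2 / 2) ≤ 1 := Real.exp_le_one_iff.2 (by nlinarith [sq_nonneg x])
  exact mul_le_one₀ h1 (by positivity) h2

lemma hasDerivAt_gaussPdf (x : ℝ) : HasDerivAt gaussPdf (-x * gaussPdf x) x := by
  have h : HasDerivAt (fun x : ℝ => -x ^ 2 / 2) (-x) x := by
    have := ((hasDerivAt_pow 2 x).neg).div_const 2
    refine this.congr_deriv ?_
    simp
    ring
  refine ((h.exp).const_mul (Real.sqrt (2 * π))⁻¹).congr_deriv ?_
  simp only [gaussPdf]; ring

lemma continuous_gaussPdf : Continuous gaussPdf := by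
  unfold gaussPdf; fun_prop

lemma gaussPdf_eq_gaussianPDFReal : gaussPdf = gaussianPDFReal 0 1 := by
  ext x; simp [gaussPdf, gaussianPDFReal]

lemma integrable_gaussPdf : Integrable gaussPdf := by
  rw [gaussPdf_eq_gaussianPDFReal]; exact integrable_gaussianPDFReal 0 1

lemma abs_mul_gaussPdf_le_one (x : ℝ) : |x| * gaussPdf x ≤ 1 := by
  have h1 : (Real.sqrt (2 * π))⁻¹ ≤ 1 :=
    inv_le_one_of_one_le₀ (Real.one_le_sqrt.2 (by linarith [Real.pi_gt_three]))
  have h2 : |x| ≤ Real.exp (x ^ 2 / 2) := by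
    have := Real.add_one_le_exp (x ^ 2 / 2)
    nlinarith [sq_nonneg (|x| - 1), sq_abs x]
  have h3 : Real.exp (-x ^ 2 / 2) = (Real.exp (x ^ 2 / 2))⁻¹ := by
    rw [← Real.exp_neg]; ring_nf
  have h4 : |x| * Real.exp (-x ^ 2 / 2) ≤ 1 := by
    rw [h3, ← div_eq_mul_inv]
    exact (div_le_one (Real.exp_pos _)).2 h2
  calc |x| * gaussPdf x = (Real.sqrt (2 * π))⁻¹ * (|x| * Real.exp (-x ^ 2 / 2)) := by
        unfold gaussPdf; ring
    _ ≤ 1 := mul_le_one₀ h1 (by positivity) h4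

lemma Phi_eq_integral (x : ℝ) : Phi x = ∫ u in Iic x, gaussPdf u := by
  simp only [Phi, gaussPdf, integral_const_mul]

lemma Phi_eq_cdf : Phi = cdf (gaussianReal 0 1) := by
  ext x
  rw [cdf_eq_real, Phi_eq_integral, gaussPdf_eq_gaussianPDFReal, measureReal_def,
    gaussianReal_apply_eq_integral 0 one_ne_zero, ENNReal.toReal_ofReal]
  exact setIntegral_nonneg measurableSet_Iic fun u _ => gaussianPDFReal_nonneg 0 1 u

lemma Phi_sub_Phi (x y : ℝ) : Phi y - Phi x = ∫ u in x..y, gaussPdf u := by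
  rw [Phi_eq_integral, Phi_eq_integral]
  exact intervalIntegral.integral_Iic_sub_Iic integrable_gaussPdf.integrableOn
    integrable_gaussPdf.integrableOn

lemma hasDerivAt_Phi (x : ℝ) : HasDerivAt Phi (gaussPdf x) x := by
  have h : Phi = fun y => (∫ u in (0 : ℝ)..y, gaussPdf u) + Phi 0 := by
    ext y; rw [← Phi_sub_Phi]; ring
  rw [h]
  exact (intervalIntegral.integral_hasDerivAt_right
    (continuous_gaussPdf.intervalIntegrable _ _)
    (continuous_gaussPdf.stronglyMeasurableAtFilter _ _)
    continuous_gaussPdf.continuousAt).add_const _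

lemma continuous_Phi : Continuous Phi :=
  continuous_iff_continuousAt.2 fun x => (hasDerivAt_Phi x).continuousAt

lemma Phi_strictMono : StrictMono Phi :=
  strictMono_of_deriv_pos fun x => by rw [(hasDerivAt_Phi x).deriv]; exact gaussPdf_pos x

lemma tendsto_Phi_atTop : Tendsto Phi atTop (𝓝 1) := by
  rw [Phi_eq_cdf]; exact tendsto_cdf_atTop _

lemma tendsto_Phi_atBot : Tendsto Phi atBot (𝓝 0) := by
  rw [Phi_eq_cdf]; exact tendsto_cdf_atBot _

lemma Phi_pos (x : ℝ) : 0 < Phi x := by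
  have h : 0 ≤ Phi (x - 1) := by rw [Phi_eq_cdf]; exact cdf_nonneg _ _
  exact h.trans_lt (Phi_strictMono (by linarith))

lemma Phi_lt_one (x : ℝ) : Phi x < 1 := by
  have h : Phi (x + 1) ≤ 1 := by rw [Phi_eq_cdf]; exact cdf_le_one _ _
  exact (Phi_strictMono (by linarith)).trans_le h

lemma Phi_mem_Ioo (x : ℝ) : Phi x ∈ Ioo (0 : ℝ) 1 := ⟨Phi_pos x, Phi_lt_one x⟩

lemma Phi_neg (x : ℝ) : Phi (-x) = 1 - Phi x := by
  have h : ∀ y, HasDerivAt (fun y => Phi y + Phi (-y)) 0 y := fun y => by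
    have h2 := (hasDerivAt_Phi (-y)).comp y (hasDerivAt_neg y)
    refine ((hasDerivAt_Phi y).add h2).congr_deriv ?_
    rw [gaussPdf_neg]; ring
  have hc : ∀ y, Phi y + Phi (-y) = Phi x + Phi (-x) := fun y =>
    is_const_of_deriv_eq_zero (fun z => (h z).differentiableAt) (fun z => (h z).deriv) y x
  have hl : Tendsto (fun y => Phi y + Phi (-y)) atTop (𝓝 (1 + 0)) :=
    tendsto_Phi_atTop.add (tendsto_Phi_atBot.comp tendsto_neg_atTop_atBot)
  have := tendsto_nhds_unique (tendsto_const_nhds.congr fun y => (hc y).symm) hl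
  linarith

lemma PhiInv_Phi (x : ℝ) : PhiInv (Phi x) = x :=
  Function.leftInverse_invFun Phi_strictMono.injective x

lemma Phi_PhiInv {p : ℝ} (hp : p ∈ Ioo (0 : ℝ) 1) : Phi (PhiInv p) = p := by
  refine Function.invFun_eq ?_
  obtain ⟨a, ha⟩ := (tendsto_Phi_atBot.eventually (gt_mem_nhds hp.1)).exists
  obtain ⟨b, hb⟩ := (tendsto_Phi_atTop.eventually (lt_mem_nhds hp.2)).exists
  exact mem_range_of_exists_le_of_exists_ge continuous_Phi ⟨a, ha.le⟩ ⟨b, hb.le⟩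

lemma PhiInv_strictMonoOn : StrictMonoOn PhiInv (Ioo 0 1) := fun p hp q hq hpq => by
  rw [← Phi_PhiInv hp, ← Phi_PhiInv hq] at hpq
  exact Phi_strictMono.lt_iff_lt.1 hpq

lemma PhiInv_one_sub {p : ℝ} (hp : p ∈ Ioo (0 : ℝ) 1) : PhiInv (1 - p) = -PhiInv p := by
  conv_lhs => rw [← Phi_PhiInv hp, ← Phi_neg, PhiInv_Phi]

lemma continuousAt_PhiInv {p : ℝ} (hp : p ∈ Ioo (0 : ℝ) 1) : ContinuousAt PhiInv p := by
  refine PhiInv_strictMonoOn.continuousAt_of_image_mem_nhds (Ioo_mem_nhds hp.1 hp.2) ?_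
  have : PhiInv '' Ioo 0 1 = univ :=
    eq_univ_of_forall fun x => ⟨Phi x, Phi_mem_Ioo x, PhiInv_Phi x⟩
  rw [this]; exact univ_mem

/-- The Gaussian isoperimetric profile. -/
noncomputable def gaussProfile (p : ℝ) : ℝ := gaussPdf (PhiInv p)

lemma gaussProfile_pos (p : ℝ) : 0 < gaussProfile p := gaussPdf_pos _

lemma gaussProfile_Phi (x : ℝ) : gaussProfile (Phi x) = gaussPdf x := by
  rw [gaussProfile, PhiInv_Phi]

lemma hasDerivAt_PhiInv {p : ℝ} (hp : p ∈ Ioo (0 : ℝ) 1) :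
    HasDerivAt PhiInv (gaussProfile p)⁻¹ p :=
  HasDerivAt.of_local_left_inverse (continuousAt_PhiInv hp) (hasDerivAt_Phi _)
    (gaussProfile_pos p).ne'
    ((Ioo_mem_nhds hp.1 hp.2 : Ioo (0 : ℝ) 1 ∈ 𝓝 p) |> fun h => by
      filter_upwards [h] with q hq using Phi_PhiInv hq)

lemma hasDerivAt_gaussProfile {p : ℝ} (hp : p ∈ Ioo (0 : ℝ) 1) :
    HasDerivAt gaussProfile (-PhiInv p) p := by
  refine ((hasDerivAt_gaussPdf (PhiInv p)).comp p (hasDerivAt_PhiInv hp)).congr_deriv ?_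
  have := (gaussProfile_pos p).ne'
  simp only [gaussProfile] at this ⊢
  field_simp

lemma gaussProfile_one_sub {p : ℝ} (hp : p ∈ Ioo (0 : ℝ) 1) :
    gaussProfile (1 - p) = gaussProfile p := by
  rw [gaussProfile, PhiInv_one_sub hp, gaussPdf_neg, gaussProfile]

lemma gaussPdf_le_gaussPdf {x y : ℝ} (h : |x| ≤ |y|) : gaussPdf y ≤ gaussPdf x := by
  have := sq_le_sq.2 h
  unfold gaussPdf
  gcongr

lemma monotone_div_gaussPdf : Monotone fun x : ℝ => x / gaussPdf x := by
  have h : ∀ x, HasDerivAt (fun x : ℝ => x / gaussPdf x) ((1 + x ^ 2) / gaussPdf x) x :=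
    fun x => by
    have := (gaussPdf_pos x).ne'
    refine ((hasDerivAt_id x).div (hasDerivAt_gaussPdf x) this).congr_deriv ?_
    simp only [id]; field_simp; ring
  refine monotone_of_deriv_nonneg (fun x => (h x).differentiableAt) fun x => ?_
  rw [(h x).deriv]
  have := gaussPdf_pos x
  positivity

lemma nonneg_of_second_deriv_nonneg {f f' f'' : ℝ → ℝ} {b : ℝ}
    (hf : ∀ x ∈ Ico 0 b, HasDerivAt f (f' x) x) (hf' : ∀ x ∈ Ico 0 b, HasDerivAt f' (f'' x) x)
    (h0 : 0 ≤ f 0) (h0' : 0 ≤ f' 0) (h'' : ∀ x ∈ Ico 0 b, 0 ≤ f'' x) :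
    ∀ x ∈ Ico 0 b, 0 ≤ f x := by
  have key : ∀ {g g' : ℝ → ℝ}, (∀ x ∈ Ico 0 b, HasDerivAt g (g' x) x) → 0 ≤ g 0 →
      (∀ x ∈ Ico 0 b, 0 ≤ g' x) → ∀ x ∈ Ico 0 b, 0 ≤ g x := by
    intro g g' hg hg0 hg' x hx
    have hm : MonotoneOn g (Ico 0 b) := by
      refine monotoneOn_of_deriv_nonneg (convex_Ico 0 b)
        (fun y hy => (hg y hy).continuousAt.continuousWithinAt)
        (fun y hy => (hg y (interior_subset hy)).differentiableAt.differentiableWithinAt)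
        fun y hy => ?_
      rw [(hg y (interior_subset hy)).deriv]
      exact hg' y (interior_subset hy)
    exact hg0.trans (hm ⟨le_rfl, hx.1.trans_lt hx.2⟩ hx hx.1)
  exact key hf h0 (key hf' h0' h'')

lemma hasDerivAt_gaussProfile_sq {p : ℝ} (hp : p ∈ Ioo (0 : ℝ) 1) :
    HasDerivAt (fun p => gaussProfile p ^ 2) (-2 * (gaussProfile p * PhiInv p)) p := by
  refine ((hasDerivAt_gaussProfile hp).fun_pow 2).congr_deriv ?_
  simp; ring

lemma hasDerivAt_gaussProfile_mul_PhiInv {p : ℝ} (hp : p ∈ Ioo (0 : ℝ) 1) :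
    HasDerivAt (fun p => gaussProfile p * PhiInv p) (1 - PhiInv p ^ 2) p := by
  refine ((hasDerivAt_gaussProfile hp).mul (hasDerivAt_PhiInv hp)).congr_deriv ?_
  have := (gaussProfile_pos p).ne'
  field_simp; ring

lemma abs_PhiInv_add_le {c x : ℝ} (hc : c ≤ 1 / 2) (hx : x ∈ Ico 0 c) :
    |PhiInv (c + x)| ≤ |PhiInv (c - x)| := by
  obtain ⟨h1, h2⟩ := hx
  have ha : c + x ∈ Ioo (0 : ℝ) 1 := ⟨by linarith, by linarith⟩
  have hb : c - x ∈ Ioo (0 : ℝ) 1 := ⟨by linarith, by linarith⟩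
  have ha' : 1 - (c + x) ∈ Ioo (0 : ℝ) 1 := ⟨by linarith, by linarith⟩
  have e1 := PhiInv_strictMonoOn.monotoneOn hb ha (by linarith)
  have e2 := PhiInv_strictMonoOn.monotoneOn hb ha' (by linarith)
  rw [PhiInv_one_sub ha] at e2
  have e3 : |PhiInv (c + x)| ≤ -PhiInv (c - x) := abs_le.2 ⟨by linarith, by linarith⟩
  exact e3.trans (neg_le_abs _)

lemma two_mul_PhiInv_sq_le {c x : ℝ} (hc : c ≤ 1 / 2) (hx : x ∈ Ico 0 c) :
    2 * PhiInv c ^ 2 ≤ PhiInv (c + x) ^ 2 + PhiInv (c - x) ^ 2 := by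
  have hder : ∀ p ∈ Ioo (0 : ℝ) 1,
      HasDerivAt (fun p => PhiInv p ^ 2) (2 * (PhiInv p / gaussPdf (PhiInv p))) p := fun p hp => by
    refine ((hasDerivAt_PhiInv hp).fun_pow 2).congr_deriv ?_
    simp [gaussProfile]; ring
  have hconv : ConvexOn ℝ (Ioo (0 : ℝ) 1) fun p => PhiInv p ^ 2 := by
    refine MonotoneOn.convexOn_of_deriv (convex_Ioo 0 1)
      (fun p hp => (hder p hp).continuousAt.continuousWithinAt)
      (fun p hp => (hder p (interior_subset hp)).differentiableAt.differentiableWithinAt) ?_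
    intro p hp q hq hpq
    rw [interior_Ioo] at hp hq
    rw [(hder p hp).deriv, (hder q hq).deriv]
    have := monotone_div_gaussPdf (PhiInv_strictMonoOn.monotoneOn hp hq hpq)
    simp only at this
    linarith
  obtain ⟨h1, h2⟩ := hx
  have ha : c + x ∈ Ioo (0 : ℝ) 1 := ⟨by linarith, by linarith⟩
  have hb : c - x ∈ Ioo (0 : ℝ) 1 := ⟨by linarith, by linarith⟩
  have := hconv.2 ha hb (by norm_num : (0 : ℝ) ≤ 1 / 2) (by norm_num : (0 : ℝ) ≤ 1 / 2)
    (by norm_num)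
  simp only [smul_eq_mul] at this
  rw [show 1 / 2 * (c + x) + 1 / 2 * (c - x) = c by ring] at this
  linarith

lemma two_mul_gaussProfile_le {c x : ℝ} (hc : c ≤ 1 / 2) (hx : x ∈ Ico 0 c) :
    2 * gaussProfile c ≤ Real.sqrt (gaussProfile (c + x) ^ 2 + x ^ 2) +
      Real.sqrt (gaussProfile (c - x) ^ 2 + x ^ 2) := by
  have hcp : ∀ y ∈ Ico 0 c, c + y ∈ Ioo (0 : ℝ) 1 :=
    fun y hy => ⟨by linarith [hy.1, hy.2], by linarith [hy.1, hy.2]⟩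
  have hcm : ∀ y ∈ Ico 0 c, c - y ∈ Ioo (0 : ℝ) 1 :=
    fun y hy => ⟨by linarith [hy.1, hy.2], by linarith [hy.1, hy.2]⟩
  have dp : ∀ y : ℝ, HasDerivAt (fun y => c + y) 1 y := fun y => (hasDerivAt_id y).const_add c
  have dm : ∀ y : ℝ, HasDerivAt (fun y => c - y) (-1) y := fun y => (hasDerivAt_id y).const_sub c
  have S := nonneg_of_second_deriv_nonneg
    (f := fun y => gaussProfile (c + y) ^ 2 + gaussProfile (c - y) ^ 2 - 2 * gaussProfile c ^ 2
      + (2 - 2 * PhiInv c ^ 2) * y ^ 2)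
    (f' := fun y => -2 * (gaussProfile (c + y) * PhiInv (c + y))
      + 2 * (gaussProfile (c - y) * PhiInv (c - y)) + (4 - 4 * PhiInv c ^ 2) * y)
    (f'' := fun y => 2 * PhiInv (c + y) ^ 2 + 2 * PhiInv (c - y) ^ 2 - 4 * PhiInv c ^ 2)
    (b := c)
    (fun y hy => by
      have e1 := (hasDerivAt_gaussProfile_sq (hcp y hy)).comp y (dp y)
      have e2 := (hasDerivAt_gaussProfile_sq (hcm y hy)).comp y (dm y)
      refine (((e1.add e2).sub_const (2 * gaussProfile c ^ 2)).add
        ((hasDerivAt_pow 2 y).const_mul (2 - 2 * PhiInv c ^ 2))).congr_deriv ?_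
      simp; ring)
    (fun y hy => by
      have e1 := (hasDerivAt_gaussProfile_mul_PhiInv (hcp y hy)).comp y (dp y)
      have e2 := (hasDerivAt_gaussProfile_mul_PhiInv (hcm y hy)).comp y (dm y)
      refine (((e1.const_mul (-2)).add (e2.const_mul 2)).add
        ((hasDerivAt_id y).const_mul (4 - 4 * PhiInv c ^ 2))).congr_deriv ?_
      ring)
    (by simp; linarith) (by simp)
    (fun y hy => by linarith [two_mul_PhiInv_sq_le hc hy]) x hx
  have G := nonneg_of_second_deriv_nonneg
    (f := fun y => -4 * (gaussProfile c * PhiInv c) * y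
      - (gaussProfile (c + y) ^ 2 - gaussProfile (c - y) ^ 2))
    (f' := fun y => -4 * (gaussProfile c * PhiInv c)
      - (-2 * (gaussProfile (c + y) * PhiInv (c + y))
      - 2 * (gaussProfile (c - y) * PhiInv (c - y))))
    (f'' := fun y => 2 * PhiInv (c - y) ^ 2 - 2 * PhiInv (c + y) ^ 2)
    (b := c)
    (fun y hy => by
      have e1 := (hasDerivAt_gaussProfile_sq (hcp y hy)).comp y (dp y)
      have e2 := (hasDerivAt_gaussProfile_sq (hcm y hy)).comp y (dm y)
      refine (((hasDerivAt_id y).const_mul (-4 * (gaussProfile c * PhiInv c))).sub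
        (e1.sub e2)).congr_deriv ?_
      simp)
    (fun y hy => by
      have e1 := (hasDerivAt_gaussProfile_mul_PhiInv (hcp y hy)).comp y (dp y)
      have e2 := (hasDerivAt_gaussProfile_mul_PhiInv (hcm y hy)).comp y (dm y)
      refine (((e1.const_mul (-2)).sub (e2.const_mul 2)).const_sub
        (-4 * (gaussProfile c * PhiInv c))).congr_deriv ?_
      ring)
    (by simp) (by simp; linarith)
    (fun y hy => by linarith [sq_le_sq.2 (abs_PhiInv_add_le hc hy)]) x hx
  have P : gaussProfile (c - x) ≤ gaussProfile (c + x) :=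
    gaussPdf_le_gaussPdf (abs_PhiInv_add_le hc hx)
  set A := gaussProfile (c + x) with hA
  set B := gaussProfile (c - x) with hB
  set I := gaussProfile c with hI
  have hA0 : 0 < A := gaussProfile_pos _
  have hB0 : 0 < B := gaussProfile_pos _
  have hI0 : 0 < I := gaussProfile_pos _
  set w := PhiInv c
  have hAB : 0 ≤ A ^ 2 - B ^ 2 := by nlinarith
  have a2 := Real.sq_sqrt (by positivity : 0 ≤ A ^ 2 + x ^ 2)
  have b2 := Real.sq_sqrt (by positivity : 0 ≤ B ^ 2 + x ^ 2)
  set α := Real.sqrt (A ^ 2 + x ^ 2)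
  set β := Real.sqrt (B ^ 2 + x ^ 2)
  have hα : 0 ≤ α := Real.sqrt_nonneg _
  have hβ : 0 ≤ β := Real.sqrt_nonneg _
  have hg : (A ^ 2 - B ^ 2) ^ 2 ≤ 16 * I ^ 2 * (w ^ 2 * x ^ 2) := by
    have : (A ^ 2 - B ^ 2) ^ 2 ≤ (-4 * (I * w) * x) ^ 2 := pow_le_pow_left₀ hAB (by linarith) 2
    linarith
  have hS : (α ^ 2 - β ^ 2) ^ 2 ≤ 8 * I ^ 2 * (α ^ 2 + β ^ 2 - 2 * I ^ 2) := by
    rw [a2, b2]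
    have : 2 * (w ^ 2 * x ^ 2) ≤ A ^ 2 + x ^ 2 + (B ^ 2 + x ^ 2) - 2 * I ^ 2 := by linarith
    nlinarith [mul_le_mul_of_nonneg_left this (by positivity : 0 ≤ 8 * I ^ 2)]
  by_contra! hlt
  have h1 : (α + β) ^ 2 < 4 * I ^ 2 := by nlinarith
  have h2 : (α - β) ^ 2 ≤ (α + β) ^ 2 := by nlinarith [mul_nonneg hα hβ]
  have h3 : ((α + β) ^ 2 - 4 * I ^ 2) * ((α - β) ^ 2 - 4 * I ^ 2) ≤ 0 := by nlinarith
  nlinarith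

/-- The Bobkov two-point inequality. -/
lemma gaussProfile_two_point {a b : ℝ} (ha : a ∈ Ioo (0 : ℝ) 1) (hb : b ∈ Ioo (0 : ℝ) 1) :
    2 * gaussProfile ((a + b) / 2) ≤ Real.sqrt (gaussProfile a ^ 2 + ((a - b) / 2) ^ 2) +
      Real.sqrt (gaussProfile b ^ 2 + ((a - b) / 2) ^ 2) := by
  have key : ∀ {a b : ℝ}, a ∈ Ioo (0 : ℝ) 1 → b ∈ Ioo (0 : ℝ) 1 → b ≤ a → a + b ≤ 1 →
      2 * gaussProfile ((a + b) / 2) ≤ Real.sqrt (gaussProfile a ^ 2 + ((a - b) / 2) ^ 2) +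
        Real.sqrt (gaussProfile b ^ 2 + ((a - b) / 2) ^ 2) := fun {a b} ha hb hab h1 => by
    have := two_mul_gaussProfile_le (c := (a + b) / 2) (x := (a - b) / 2) (by linarith)
      ⟨by linarith, by linarith [hb.1]⟩
    rwa [show (a + b) / 2 + (a - b) / 2 = a by ring,
      show (a + b) / 2 - (a - b) / 2 = b by ring] at this
  have key2 : ∀ {a b : ℝ}, a ∈ Ioo (0 : ℝ) 1 → b ∈ Ioo (0 : ℝ) 1 → b ≤ a →
      2 * gaussProfile ((a + b) / 2) ≤ Real.sqrt (gaussProfile a ^ 2 + ((a - b) / 2) ^ 2) +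
        Real.sqrt (gaussProfile b ^ 2 + ((a - b) / 2) ^ 2) := fun {a b} ha hb hab => by
    rcases le_total (a + b) 1 with h | h
    · exact key ha hb hab h
    · have ha' : 1 - a ∈ Ioo (0 : ℝ) 1 := ⟨by linarith [ha.2], by linarith [ha.1]⟩
      have hb' : 1 - b ∈ Ioo (0 : ℝ) 1 := ⟨by linarith [hb.2], by linarith [hb.1]⟩
      have := key hb' ha' (by linarith) (by linarith)
      rw [show (1 - b + (1 - a)) / 2 = 1 - (a + b) / 2 by ring,
        gaussProfile_one_sub ha, gaussProfile_one_sub hb, gaussProfile_one_sub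
          ⟨by linarith [ha.1, hb.1], by linarith [ha.2, hb.2]⟩,
        show (1 - b - (1 - a)) / 2 = (a - b) / 2 by ring] at this
      linarith
  rcases le_total b a with h | h
  · exact key2 ha hb h
  · have := key2 hb ha h
    rw [add_comm b a, show ((b - a) / 2) ^ 2 = ((a - b) / 2) ^ 2 by ring] at this
    linarith

lemma sqrt_sum_sq_add_sum_sq_le {α : Type*} (s : Finset α) (u w : α → ℝ) :
    Real.sqrt ((∑ i ∈ s, u i) ^ 2 + (∑ i ∈ s, w i) ^ 2) ≤
      ∑ i ∈ s, Real.sqrt (u i ^ 2 + w i ^ 2) := by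
  have := norm_sum_le s fun i => ((u i : ℂ) + (w i : ℂ) * Complex.I)
  simpa only [Finset.sum_add_distrib, ← Finset.sum_mul, ← Complex.ofReal_sum,
    Complex.norm_add_mul_I] using this

lemma cube_average_mem_Ioo {n : ℕ} {F : (Fin n → Bool) → ℝ} (hF : ∀ x, F x ∈ Ioo (0 : ℝ) 1) :
    ((2 : ℝ) ^ n)⁻¹ * ∑ x, F x ∈ Ioo (0 : ℝ) 1 := by
  have h1 : 0 < ∑ x, F x := Finset.sum_pos (fun x _ => (hF x).1) Finset.univ_nonempty
  have h2 : ∑ x, F x < ∑ _x : Fin n → Bool, (1 : ℝ) :=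
    Finset.sum_lt_sum_of_nonempty Finset.univ_nonempty fun x _ => (hF x).2
  simp at h2
  refine ⟨by positivity, ?_⟩
  rw [inv_mul_lt_iff₀ (by positivity)]
  simpa using h2

/-- The Bobkov inequality on the discrete cube. -/
lemma gaussProfile_cube_fin (n : ℕ) (F : (Fin n → Bool) → ℝ) (hF : ∀ x, F x ∈ Ioo (0 : ℝ) 1) :
    gaussProfile (((2 : ℝ) ^ n)⁻¹ * ∑ x, F x) ≤ ((2 : ℝ) ^ n)⁻¹ * ∑ x,
      Real.sqrt (gaussProfile (F x) ^ 2 + ∑ i,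
        ((F (Function.update x i true) - F (Function.update x i false)) / 2) ^ 2) := by
  induction n with
  | zero =>
    simp [Real.sqrt_sq (gaussProfile_pos _).le]
  | succ n ih =>
    have hsum : ∀ G : (Fin (n + 1) → Bool) → ℝ, ∑ x, G x =
        (∑ x : Fin n → Bool, G (Fin.cons true x)) + ∑ x : Fin n → Bool, G (Fin.cons false x) := by
      intro G
      rw [← (Fin.consEquiv fun _ => Bool).sum_comp, Fintype.sum_prod_type, Fintype.sum_bool]
      rfl
    set m : Bool → ℝ := fun b => ((2 : ℝ) ^ n)⁻¹ * ∑ x : Fin n → Bool, F (Fin.cons b x) with hm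
    have hm01 : ∀ b, m b ∈ Ioo (0 : ℝ) 1 := fun b => cube_average_mem_Ioo fun x => hF _
    have step : ∀ b, Real.sqrt (gaussProfile (m b) ^ 2 + ((m true - m false) / 2) ^ 2) ≤
        ((2 : ℝ) ^ n)⁻¹ * ∑ x : Fin n → Bool, Real.sqrt (gaussProfile (F (Fin.cons b x)) ^ 2 + ∑ i,
          ((F (Function.update (Fin.cons b x : Fin (n + 1) → Bool) i true) -
            F (Function.update (Fin.cons b x : Fin (n + 1) → Bool) i false)) / 2) ^ 2) := by
      intro b
      have h := ih (fun x => F (Fin.cons b x)) fun x => hF _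
      set u : (Fin n → Bool) → ℝ := fun x => Real.sqrt (gaussProfile (F (Fin.cons b x)) ^ 2 + ∑ i,
        ((F (Fin.cons b (Function.update x i true)) -
          F (Fin.cons b (Function.update x i false))) / 2) ^ 2) with hu
      set w : (Fin n → Bool) → ℝ := fun x =>
        (F (Fin.cons true x) - F (Fin.cons false x)) / 2 with hw
      have e : ∀ x : Fin n → Bool, gaussProfile (F (Fin.cons b x)) ^ 2 + ∑ i,
          ((F (Function.update (Fin.cons b x : Fin (n + 1) → Bool) i true) -
            F (Function.update (Fin.cons b x : Fin (n + 1) → Bool) i false)) / 2) ^ 2 =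
          u x ^ 2 + w x ^ 2 := by
        intro x
        rw [hu]
        simp only
        rw [Real.sq_sqrt (by positivity), Fin.sum_univ_succ]
        simp only [Fin.update_cons_zero, ← Fin.cons_update, hw]
        ring
      simp_rw [e]
      have hw' : (m true - m false) / 2 = ((2 : ℝ) ^ n)⁻¹ * ∑ x, w x := by
        simp only [hm, hw, ← Finset.sum_div, Finset.sum_sub_distrib]
        ring
      rw [hw']
      calc Real.sqrt (gaussProfile (m b) ^ 2 + (((2 : ℝ) ^ n)⁻¹ * ∑ x, w x) ^ 2)
          ≤ Real.sqrt ((((2 : ℝ) ^ n)⁻¹ * ∑ x, u x) ^ 2 + (((2 : ℝ) ^ n)⁻¹ * ∑ x, w x) ^ 2) := by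
            gcongr
            exact (gaussProfile_pos _).le
        _ = ((2 : ℝ) ^ n)⁻¹ * Real.sqrt ((∑ x, u x) ^ 2 + (∑ x, w x) ^ 2) := by
            rw [mul_pow, mul_pow, ← mul_add, Real.sqrt_mul (by positivity),
              Real.sqrt_sq (by positivity)]
        _ ≤ _ := by
            gcongr
            exact sqrt_sum_sq_add_sum_sq_le _ _ _
    have h2 := gaussProfile_two_point (hm01 true) (hm01 false)
    have h3 := step true
    have h4 := step false
    have e5 : ((2 : ℝ) ^ (n + 1))⁻¹ * ∑ x, F x = (m true + m false) / 2 := by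
      rw [hsum]; simp only [hm, pow_succ, mul_inv]; ring
    rw [e5, hsum, pow_succ, mul_inv]
    linarith

lemma gaussProfile_cube {ι : Type*} [Fintype ι] [DecidableEq ι] (F : (ι → Bool) → ℝ)
    (hF : ∀ x, F x ∈ Ioo (0 : ℝ) 1) :
    gaussProfile (((2 : ℝ) ^ Fintype.card ι)⁻¹ * ∑ x, F x) ≤ ((2 : ℝ) ^ Fintype.card ι)⁻¹ * ∑ x,
      Real.sqrt (gaussProfile (F x) ^ 2 + ∑ i,
        ((F (Function.update x i true) - F (Function.update x i false)) / 2) ^ 2) := by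
  have e := Fintype.equivFin ι
  have h := gaussProfile_cube_fin (Fintype.card ι) (fun y => F (y ∘ e)) fun y => hF _
  have hs : ∀ G : (ι → Bool) → ℝ, ∑ x, G x = ∑ y : Fin (Fintype.card ι) → Bool, G (y ∘ e) :=
    fun G => ((e.symm.arrowCongr (Equiv.refl Bool)).sum_comp G).symm
  rw [hs, hs]
  refine h.trans_eq ?_
  congr 1
  refine Finset.sum_congr rfl fun y _ => ?_
  congr 2
  refine (Fintype.sum_equiv e _ _ fun i => ?_).symm
  simp [Function.update_comp_equiv]

/-- The sign `±1` associated with a Boolean. -/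
def boolSign (b : Bool) : ℝ := if b then 1 else -1

/-- The normalised sums of signs, with values in Euclidean space. -/
noncomputable def cubeSum (d n : ℕ) (x : Fin d × Fin n → Bool) : EuclideanSpace ℝ (Fin d) :=
  WithLp.toLp 2 fun j => (Real.sqrt n)⁻¹ * ∑ k, boolSign (x (j, k))

/-- The law of the normalised sums of signs. -/
noncomputable def cubeLaw (d n : ℕ) : Measure (EuclideanSpace ℝ (Fin d)) :=
  Measure.map (cubeSum d n) (uniformOn univ)

instance (d n : ℕ) : IsProbabilityMeasure (cubeLaw d n) := by
  have : IsProbabilityMeasure (uniformOn (univ : Set (Fin d × Fin n → Bool))) :=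
    isProbabilityMeasure_uniformOn finite_univ univ_nonempty
  exact Measure.isProbabilityMeasure_map (measurable_of_finite _).aemeasurable

lemma integral_cubeLaw {G : Type*} [NormedAddCommGroup G] [NormedSpace ℝ G] [CompleteSpace G]
    (d n : ℕ) {g : EuclideanSpace ℝ (Fin d) → G} (hg : Continuous g) :
    ∫ z, g z ∂cubeLaw d n =
      ((2 : ℝ) ^ Fintype.card (Fin d × Fin n))⁻¹ • ∑ x, g (cubeSum d n x) := by
  have hS : Measurable (cubeSum d n) := measurable_of_finite _
  have hu : IsProbabilityMeasure (uniformOn (univ : Set (Fin d × Fin n → Bool))) :=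
    isProbabilityMeasure_uniformOn finite_univ univ_nonempty
  rw [cubeLaw, integral_map hS.aemeasurable hg.aestronglyMeasurable,
    integral_fintype (Integrable.of_finite), Finset.smul_sum]
  refine Finset.sum_congr rfl fun x _ => ?_
  congr 1
  rw [measureReal_def, uniformOn_univ]
  simp

lemma tendsto_cos_div_sqrt_pow (t : ℝ) :
    Tendsto (fun n : ℕ => Real.cos ((Real.sqrt n)⁻¹ * t) ^ n) atTop
      (𝓝 (Real.exp (-t ^ 2 / 2))) := by
  have h : Tendsto (fun n : ℕ => (n : ℝ) * (Real.cos ((Real.sqrt n)⁻¹ * t) - 1)) atTop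
      (𝓝 (-t ^ 2 / 2)) := by
    have hlim : Tendsto (fun n : ℕ => t ^ 4 * (5 / 96) * ((n : ℝ)⁻¹)) atTop (𝓝 0) := by
      simpa using (tendsto_inv_atTop_nhds_zero_nat (𝕜 := ℝ)).const_mul (t ^ 4 * (5 / 96))
    have h0 : Tendsto (fun n : ℕ => (Real.sqrt n)⁻¹ * t) atTop (𝓝 0) := by
      simpa using ((tendsto_inv_atTop_zero.comp Real.tendsto_sqrt_atTop).comp
        (tendsto_natCast_atTop_atTop (R := ℝ))).mul_const t
    rw [tendsto_iff_norm_sub_tendsto_zero]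
    refine squeeze_zero' (Eventually.of_forall fun n => norm_nonneg _) ?_ hlim
    filter_upwards [eventually_gt_atTop 0,
      h0.abs.eventually (ge_mem_nhds (by simp : |(0 : ℝ)| < 1))] with n hn hx
    have hb := Real.cos_bound hx
    have hn' : (0 : ℝ) < n := by exact_mod_cast hn
    have hs : (Real.sqrt n)⁻¹ ^ 2 = (n : ℝ)⁻¹ := by rw [inv_pow, Real.sq_sqrt hn'.le]
    have e1 : (n : ℝ) * (Real.cos ((Real.sqrt n)⁻¹ * t) - 1) - -t ^ 2 / 2 =
        n * (Real.cos ((Real.sqrt n)⁻¹ * t) - (1 - ((Real.sqrt n)⁻¹ * t) ^ 2 / 2)) := by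
      rw [mul_pow, hs]; field_simp; ring
    have e2 : |(Real.sqrt n)⁻¹ * t| ^ 4 = (n : ℝ)⁻¹ ^ 2 * t ^ 4 := by
      rw [← hs, (by decide : Even 4).pow_abs]; ring
    rw [e1, Real.norm_eq_abs, abs_mul, abs_of_pos hn']
    calc (n : ℝ) * _ ≤ n * (|(Real.sqrt n)⁻¹ * t| ^ 4 * (5 / 96)) := by gcongr
      _ = _ := by rw [e2]; field_simp
  simpa using Real.tendsto_one_add_pow_exp_of_tendsto h

lemma charFun_cubeLaw (d n : ℕ) (t : EuclideanSpace ℝ (Fin d)) :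
    charFun (cubeLaw d n) t = ((∏ j, Real.cos ((Real.sqrt n)⁻¹ * t j) ^ n : ℝ) : ℂ) := by
  have hterm : ∀ x : Fin d × Fin n → Bool,
      Complex.exp (inner ℝ (cubeSum d n x) t * Complex.I) =
        ∏ i, Complex.exp (((Real.sqrt n)⁻¹ * t i.1 * boolSign (x i) : ℝ) * Complex.I) := by
    intro x
    rw [← Complex.exp_sum, ← Finset.sum_mul, ← Complex.ofReal_sum, Fintype.sum_prod_type]
    congr 3
    simp only [cubeSum, PiLp.inner_apply, RCLike.inner_apply, conj_trivial]
    refine Finset.sum_congr rfl fun j _ => ?_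
    rw [← Finset.mul_sum]; ring
  have hb : ∀ s : ℝ, ∑ b, Complex.exp ((s * boolSign b : ℝ) * Complex.I) = 2 * Real.cos s := by
    intro s
    rw [Fintype.sum_bool, Complex.ofReal_cos, Complex.two_cos]
    simp [boolSign]
  rw [charFun_apply, integral_cubeLaw d n (by fun_prop)]
  simp_rw [hterm]
  have := Finset.prod_univ_sum (fun _ : Fin d × Fin n => (Finset.univ : Finset Bool))
    (fun i b => Complex.exp (((Real.sqrt n)⁻¹ * t i.1 * boolSign b : ℝ) * Complex.I))
  rw [Fintype.piFinset_univ] at this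
  rw [← this]
  simp_rw [hb]
  rw [Finset.prod_mul_distrib]
  simp [Complex.real_smul, Fintype.prod_prod_type]

lemma tendsto_integral_cubeLaw (d : ℕ) {g : EuclideanSpace ℝ (Fin d) → ℝ} (hg : Continuous g)
    {M : ℝ} (hM : ∀ x, |g x| ≤ M) :
    Tendsto (fun n => ∫ z, g z ∂cubeLaw d n) atTop
      (𝓝 (∫ z, g z ∂ProbabilityTheory.stdGaussian (EuclideanSpace ℝ (Fin d)))) := by
  let μ : ℕ → ProbabilityMeasure (EuclideanSpace ℝ (Fin d)) :=
    fun n => ⟨cubeLaw d n, inferInstance⟩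
  let ν : ProbabilityMeasure (EuclideanSpace ℝ (Fin d)) :=
    ⟨ProbabilityTheory.stdGaussian (EuclideanSpace ℝ (Fin d)), inferInstance⟩
  have h : Tendsto μ atTop (𝓝 ν) := by
    refine ProbabilityMeasure.tendsto_of_tendsto_charFun fun t => ?_
    simp only [μ, ν, ProbabilityMeasure.coe_mk]
    simp_rw [charFun_cubeLaw]
    rw [charFun_stdGaussian]
    have e : Complex.exp (-(‖t‖ : ℂ) ^ 2 / 2) = ((∏ j, Real.exp (-(t j) ^ 2 / 2) : ℝ) : ℂ) := by
      rw [← Real.exp_sum, Complex.ofReal_exp]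
      congr 1
      rw [← Complex.ofReal_pow, EuclideanSpace.real_norm_sq_eq]
      push_cast
      rw [← Finset.sum_div, Finset.sum_neg_distrib]
    rw [e]
    exact (Complex.continuous_ofReal.tendsto _).comp
      (tendsto_finsetProd _ fun j _ => tendsto_cos_div_sqrt_pow (t j))
  exact (ProbabilityMeasure.tendsto_iff_forall_integral_tendsto.1 h)
    (BoundedContinuousFunction.ofNormedAddCommGroup g hg M hM)

lemma sqrt_add_le_sqrt_add_sqrt {x y : ℝ} (hx : 0 ≤ x) (hy : 0 ≤ y) :
    Real.sqrt (x + y) ≤ Real.sqrt x + Real.sqrt y := by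
  refine Real.sqrt_le_iff.2 ⟨by positivity, ?_⟩
  nlinarith [Real.sq_sqrt hx, Real.sq_sqrt hy, mul_nonneg (Real.sqrt_nonneg x) (Real.sqrt_nonneg y)]

lemma abs_gaussPdf_sub_le (u v : ℝ) : |gaussPdf v - gaussPdf u| ≤ |v - u| := by
  have := Convex.norm_image_sub_le_of_norm_hasDerivWithin_le (f := gaussPdf) (C := 1)
    (fun x _ => (hasDerivAt_gaussPdf x).hasDerivWithinAt)
    (fun x _ => by
      rw [Real.norm_eq_abs, abs_mul, abs_neg, abs_of_pos (gaussPdf_pos x)]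
      exact abs_mul_gaussPdf_le_one x) convex_univ (mem_univ u) (mem_univ v)
  simpa using this

lemma abs_Phi_sub_le (u v : ℝ) : |Phi v - Phi u| ≤ gaussPdf u * |v - u| + |v - u| ^ 2 := by
  have h := Convex.norm_image_sub_le_of_norm_hasDerivWithin_le
    (f := fun z => Phi z - gaussPdf u * z) (C := |v - u|) (s := uIcc u v)
    (fun x _ => ((hasDerivAt_Phi x).sub
      ((hasDerivAt_id x).const_mul (gaussPdf u))).hasDerivWithinAt)
    (fun x hx => by
      rw [mul_one, Real.norm_eq_abs]
      exact (abs_gaussPdf_sub_le u x).trans (abs_sub_left_of_mem_uIcc hx))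
    (convex_uIcc u v) left_mem_uIcc right_mem_uIcc
  simp only [Real.norm_eq_abs] at h
  have e : Phi v - Phi u =
      (Phi v - gaussPdf u * v - (Phi u - gaussPdf u * u)) + gaussPdf u * (v - u) := by ring
  rw [e]
  refine (abs_add_le _ _).trans ?_
  rw [abs_mul, abs_of_pos (gaussPdf_pos u)]
  nlinarith

lemma cubeSum_update (d n : ℕ) (x : Fin d × Fin n → Bool) (j : Fin d) (k : Fin n) (b : Bool) :
    cubeSum d n (Function.update x (j, k) b) = cubeSum d n x +
      ((Real.sqrt n)⁻¹ * (boolSign b - boolSign (x (j, k)))) • EuclideanSpace.single j (1 : ℝ) := by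
  ext i
  simp only [cubeSum, PiLp.add_apply, PiLp.smul_apply, PiLp.single_apply, smul_eq_mul]
  by_cases hi : i = j
  · subst hi
    simp only [if_true, mul_one, ← mul_add]
    congr 1
    rw [← Finset.add_sum_erase _ _ (Finset.mem_univ k),
      ← Finset.add_sum_erase _ (fun k => boolSign (x (i, k))) (Finset.mem_univ k),
      Function.update_self]
    have : ∑ l ∈ Finset.univ.erase k, boolSign (Function.update x (i, k) b (i, l)) =
        ∑ l ∈ Finset.univ.erase k, boolSign (x (i, l)) :=
      Finset.sum_congr rfl fun l hl => by
        rw [Function.update_of_ne]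
        simpa using Finset.ne_of_mem_erase hl
    rw [this]; ring
  · simp only [hi, if_false, mul_zero, add_zero]
    congr 1
    refine Finset.sum_congr rfl fun l _ => ?_
    rw [Function.update_of_ne]
    simp [hi]

/-- The Bobkov inequality along the discrete cube, for `Phi ∘ h` with `h` having controlled
coordinate increments. -/
lemma gaussProfile_cubeLaw_le {d n : ℕ} (hn : 0 < n) {h : EuclideanSpace ℝ (Fin d) → ℝ}
    (hcont : Continuous h) {a : EuclideanSpace ℝ (Fin d) → Fin d → ℝ} {L C : ℝ} (hL : 0 ≤ L)
    (hC : 0 ≤ C) (ha : ∀ x, ∑ j, a x j ^ 2 ≤ L ^ 2)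
    (hinc : ∀ x j (δ : ℝ), |h (x + δ • EuclideanSpace.single j (1 : ℝ)) - h x| ≤
      |δ| * |a x j| + C * δ ^ 2) :
    gaussProfile (∫ z, Phi (h z) ∂cubeLaw d n) ≤
      Real.sqrt (1 + L ^ 2) * ∫ z, gaussPdf (h z) ∂cubeLaw d n +
      Real.sqrt (d * (2 * (C + (L + 2 * C) ^ 2) * L + 2 * (C + (L + 2 * C) ^ 2) ^ 2)
        * (2 * (Real.sqrt n)⁻¹)) := by
  set D := C + (L + 2 * C) ^ 2 with hD
  have hD0 : 0 ≤ D := by positivity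
  set ε := 2 * (Real.sqrt n)⁻¹ with hε
  have hn1 : (1 : ℝ) ≤ n := by exact_mod_cast hn
  have hs1 : 1 ≤ Real.sqrt n := Real.one_le_sqrt.2 hn1
  have hε0 : 0 ≤ ε := by positivity
  have hε2 : ε ≤ 2 := by
    have := inv_le_one_of_one_le₀ hs1
    linarith
  have hεn : ε ^ 2 = 4 / n := by
    rw [hε, mul_pow, inv_pow, Real.sq_sqrt (by positivity)]; ring
  have haj : ∀ x j, |a x j| ≤ L := fun x j => abs_le_of_sq_le_sq
    ((Finset.single_le_sum (f := fun j => a x j ^ 2) (fun _ _ => sq_nonneg _)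
      (Finset.mem_univ j)).trans (ha x)) hL
  have hPhi : ∀ z j (δ : ℝ), |δ| = ε →
      |Phi (h (z + δ • EuclideanSpace.single j (1 : ℝ))) - Phi (h z)| ≤
        ε * (gaussPdf (h z) * |a z j| + ε * D) := by
    intro z j δ hδ
    have h1 := abs_Phi_sub_le (h z) (h (z + δ • EuclideanSpace.single j (1 : ℝ)))
    have h2 := hinc z j δ
    rw [← sq_abs, hδ] at h2
    set Δ := |h (z + δ • EuclideanSpace.single j (1 : ℝ)) - h z|
    have hΔ : 0 ≤ Δ := abs_nonneg _
    have h3 : Δ ≤ ε * (L + 2 * C) := by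
      have := haj z j
      nlinarith [mul_le_mul_of_nonneg_left this hε0, mul_nonneg hC hε0]
    have h4 : Δ ^ 2 ≤ ε ^ 2 * (L + 2 * C) ^ 2 := by
      rw [← mul_pow]; exact pow_le_pow_left₀ hΔ h3 2
    have h5 : gaussPdf (h z) * Δ ≤ gaussPdf (h z) * (ε * |a z j|) + C * ε ^ 2 := by
      have e1 := mul_le_mul_of_nonneg_left h2 (gaussPdf_pos (h z)).le
      have e2 := mul_le_mul_of_nonneg_right (gaussPdf_le_one (h z))
        (by positivity : 0 ≤ C * ε ^ 2)
      linarith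
    rw [hD]
    linarith
  have hdiff : ∀ (x : Fin d × Fin n → Bool) j k,
      ((Phi (h (cubeSum d n (Function.update x (j, k) true))) -
        Phi (h (cubeSum d n (Function.update x (j, k) false)))) / 2) ^ 2 ≤
      1 / n * (gaussPdf (h (cubeSum d n x)) ^ 2 * a (cubeSum d n x) j ^ 2 +
        ε * (2 * D * L + 2 * D ^ 2)) := by
    intro x j k
    have habs : |Phi (h (cubeSum d n (Function.update x (j, k) true))) -
        Phi (h (cubeSum d n (Function.update x (j, k) false)))| ≤
        ε * (gaussPdf (h (cubeSum d n x)) * |a (cubeSum d n x) j| + ε * D) := by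
      rw [cubeSum_update, cubeSum_update]
      cases hx : x (j, k)
      · simp only [boolSign, Bool.false_eq_true, if_true, if_false, sub_self, mul_zero, zero_smul,
          add_zero]
        refine hPhi _ _ _ ?_
        rw [abs_of_nonneg (by norm_num), hε]; ring
      · simp only [boolSign, Bool.false_eq_true, if_true, if_false, sub_self, mul_zero, zero_smul,
          add_zero]
        rw [abs_sub_comm]
        refine hPhi _ _ _ ?_
        rw [show (Real.sqrt n)⁻¹ * (-1 - 1) = -ε by rw [hε]; ring, abs_neg, abs_of_nonneg hε0]
    set p := gaussPdf (h (cubeSum d n x)) with hp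
    set q := |a (cubeSum d n x) j| with hq
    have hp0 : 0 < p := gaussPdf_pos _
    have hp1 : p ≤ 1 := gaussPdf_le_one _
    have hq0 : 0 ≤ q := abs_nonneg _
    have hqL : q ≤ L := haj _ _
    have hpq : p * q ≤ L := by nlinarith
    have h6 : (p * q + ε * D) ^ 2 ≤ p ^ 2 * q ^ 2 + ε * (2 * D * L + 2 * D ^ 2) := by
      have e1 : ε * D * (p * q) ≤ ε * D * L := mul_le_mul_of_nonneg_left hpq (by positivity)
      have e2 : ε * (ε * D ^ 2) ≤ 2 * (ε * D ^ 2) := mul_le_mul_of_nonneg_right hε2 (by positivity)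
      nlinarith
    have h7 := pow_le_pow_left₀ (abs_nonneg _) habs 2
    rw [sq_abs, mul_pow, hεn] at h7
    rw [← sq_abs (a (cubeSum d n x) j), ← hq, div_pow]
    calc _ ≤ 4 / n * (p * q + ε * D) ^ 2 / 2 ^ 2 := by gcongr
      _ = 1 / n * (p * q + ε * D) ^ 2 := by ring
      _ ≤ _ := by gcongr
  have hroot : ∀ x : Fin d × Fin n → Bool,
      Real.sqrt (gaussProfile (Phi (h (cubeSum d n x))) ^ 2 + ∑ i,
        ((Phi (h (cubeSum d n (Function.update x i true))) -
          Phi (h (cubeSum d n (Function.update x i false)))) / 2) ^ 2) ≤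
      Real.sqrt (1 + L ^ 2) * gaussPdf (h (cubeSum d n x)) +
        Real.sqrt (d * (2 * D * L + 2 * D ^ 2) * ε) := by
    intro x
    rw [gaussProfile_Phi, Fintype.sum_prod_type]
    set p := gaussPdf (h (cubeSum d n x)) with hp
    have hp0 : 0 < p := gaussPdf_pos _
    have h8 : ∑ j, ∑ k, ((Phi (h (cubeSum d n (Function.update x (j, k) true))) -
          Phi (h (cubeSum d n (Function.update x (j, k) false)))) / 2) ^ 2 ≤
        p ^ 2 * L ^ 2 + d * (2 * D * L + 2 * D ^ 2) * ε := by
      calc _ ≤ ∑ j, ∑ _k : Fin n, 1 / (n : ℝ) * (p ^ 2 * a (cubeSum d n x) j ^ 2 +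
              ε * (2 * D * L + 2 * D ^ 2)) :=
            Finset.sum_le_sum fun j _ => Finset.sum_le_sum fun k _ => hdiff x j k
        _ = p ^ 2 * ∑ j, a (cubeSum d n x) j ^ 2 + d * (2 * D * L + 2 * D ^ 2) * ε := by
            have : (n : ℝ) ≠ 0 := by positivity
            simp only [Finset.sum_const, Finset.card_univ, Fintype.card_fin, nsmul_eq_mul,
              ← mul_assoc, mul_one_div_cancel this, one_mul, Finset.sum_add_distrib,
              Finset.mul_sum]
            ring
        _ ≤ _ := by
            have := mul_le_mul_of_nonneg_left (ha (cubeSum d n x)) (sq_nonneg p)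
            linarith
    have hT : 0 ≤ d * (2 * D * L + 2 * D ^ 2) * ε := by positivity
    calc _ ≤ Real.sqrt ((1 + L ^ 2) * p ^ 2 + d * (2 * D * L + 2 * D ^ 2) * ε) :=
          Real.sqrt_le_sqrt (by linarith)
      _ ≤ Real.sqrt ((1 + L ^ 2) * p ^ 2) + Real.sqrt (d * (2 * D * L + 2 * D ^ 2) * ε) :=
          sqrt_add_le_sqrt_add_sqrt (by positivity) hT
      _ = _ := by rw [Real.sqrt_mul (by positivity), Real.sqrt_sq hp0.le]
  have hmain := gaussProfile_cube (fun x : Fin d × Fin n → Bool => Phi (h (cubeSum d n x)))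
    fun x => Phi_mem_Ioo _
  rw [integral_cubeLaw d n (g := fun z => Phi (h z)) (continuous_Phi.comp hcont),
    integral_cubeLaw d n (g := fun z => gaussPdf (h z)) (continuous_gaussPdf.comp hcont), smul_eq_mul,
    smul_eq_mul]
  refine hmain.trans ?_
  calc _ ≤ ((2 : ℝ) ^ Fintype.card (Fin d × Fin n))⁻¹ * ∑ x : Fin d × Fin n → Bool,
        (Real.sqrt (1 + L ^ 2) * gaussPdf (h (cubeSum d n x)) +
        Real.sqrt (d * (2 * D * L + 2 * D ^ 2) * ε)) := by
        gcongr with x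
        exact hroot x
    _ = _ := by
        rw [Finset.sum_add_distrib, ← Finset.mul_sum]
        simp only [Finset.sum_const, Finset.card_univ, Fintype.card_fun, Fintype.card_bool,
          nsmul_eq_mul]
        push_cast
        field_simp

lemma integral_Phi_mem_Ioo {α : Type*} [MeasurableSpace α] {μ : Measure α} [IsProbabilityMeasure μ]
    {h : α → ℝ} (hm : Measurable h) : ∫ z, Phi (h z) ∂μ ∈ Ioo (0 : ℝ) 1 := by
  have hPhi : Integrable (fun z => Phi (h z)) μ :=
    Integrable.of_bound (continuous_Phi.measurable.comp hm).aestronglyMeasurable 1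
      (ae_of_all _ fun z => by
        rw [Real.norm_eq_abs, abs_of_pos (Phi_pos _)]; exact (Phi_lt_one _).le)
  constructor
  · rw [integral_pos_iff_support_of_nonneg (fun z => (Phi_pos _).le) hPhi]
    have : Function.support (fun z => Phi (h z)) = univ :=
      eq_univ_of_forall fun z => (Phi_pos _).ne'
    rw [this]; simp
  · have h1 : 0 < ∫ z, (1 - Phi (h z)) ∂μ := by
      rw [integral_pos_iff_support_of_nonneg (fun z => sub_nonneg.2 (Phi_lt_one _).le)
        ((integrable_const 1).sub hPhi)]
      have : Function.support (fun z => 1 - Phi (h z)) = univ :=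
        eq_univ_of_forall fun z => (sub_pos.2 (Phi_lt_one _)).ne'
      rw [this]; simp
    rw [integral_sub (integrable_const 1) hPhi] at h1
    simp at h1
    exact h1

/-- The Bobkov functional inequality for the Gaussian measure. -/
lemma gaussProfile_stdGaussian_le {d : ℕ} {h : EuclideanSpace ℝ (Fin d) → ℝ}
    (hcont : Continuous h) {a : EuclideanSpace ℝ (Fin d) → Fin d → ℝ} {L C : ℝ} (hL : 0 ≤ L)
    (hC : 0 ≤ C) (ha : ∀ x, ∑ j, a x j ^ 2 ≤ L ^ 2)
    (hinc : ∀ x j (δ : ℝ), |h (x + δ • EuclideanSpace.single j (1 : ℝ)) - h x| ≤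
      |δ| * |a x j| + C * δ ^ 2) :
    gaussProfile (∫ z, Phi (h z) ∂ProbabilityTheory.stdGaussian (EuclideanSpace ℝ (Fin d))) ≤
      Real.sqrt (1 + L ^ 2) *
        ∫ z, gaussPdf (h z) ∂ProbabilityTheory.stdGaussian (EuclideanSpace ℝ (Fin d)) := by
  have h1 := tendsto_integral_cubeLaw d (continuous_Phi.comp hcont) (M := 1) fun x => by
    rw [Function.comp_apply, abs_of_pos (Phi_pos _)]; exact (Phi_lt_one _).le
  have h2 := tendsto_integral_cubeLaw d (continuous_gaussPdf.comp hcont) (M := 1) fun x => by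
    rw [Function.comp_apply, abs_of_pos (gaussPdf_pos _)]; exact gaussPdf_le_one _
  have h3 := (hasDerivAt_gaussProfile (integral_Phi_mem_Ioo
    (μ := ProbabilityTheory.stdGaussian (EuclideanSpace ℝ (Fin d)))
    hcont.measurable)).continuousAt.tendsto.comp h1
  have h4 : Tendsto (fun n : ℕ =>
      Real.sqrt (d * (2 * (C + (L + 2 * C) ^ 2) * L + 2 * (C + (L + 2 * C) ^ 2) ^ 2)
        * (2 * (Real.sqrt n)⁻¹))) atTop (𝓝 0) := by
    have h0 : Tendsto (fun n : ℕ => (Real.sqrt n)⁻¹) atTop (𝓝 0) :=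
      (tendsto_inv_atTop_zero.comp Real.tendsto_sqrt_atTop).comp
        (tendsto_natCast_atTop_atTop (R := ℝ))
    have := ((h0.const_mul 2).const_mul
      (d * (2 * (C + (L + 2 * C) ^ 2) * L + 2 * (C + (L + 2 * C) ^ 2) ^ 2))).sqrt
    simpa using this
  have h5 := (h2.const_mul (Real.sqrt (1 + L ^ 2))).add h4
  rw [add_zero] at h5
  refine le_of_tendsto_of_tendsto h3 h5 ?_
  filter_upwards [eventually_gt_atTop 0] with n hn
  exact gaussProfile_cubeLaw_le hn hcont hL hC ha hinc

lemma exists_smooth_approx_of_lipschitz {E : Type*} [NormedAddCommGroup E] [InnerProductSpace ℝ E]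
    [FiniteDimensional ℝ E] [MeasurableSpace E] [BorelSpace E] {ρ : E → ℝ}
    (hρ : LipschitzWith 1 ρ) {ε : ℝ} (hε : 0 < ε) :
    ∃ (g : E → ℝ) (g' : E → E →L[ℝ] ℝ) (C : ℝ), 0 ≤ C ∧ (∀ x, HasFDerivAt g (g' x) x) ∧
      (∀ x, ‖g' x‖ ≤ 1) ∧ (∀ x y, ‖g' x - g' y‖ ≤ C * ‖x - y‖) ∧ ∀ x, |g x - ρ x| ≤ ε := by
  let φ : ContDiffBump (0 : E) := ⟨ε / 2, ε, by positivity, by linarith⟩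
  set L := ContinuousLinearMap.lsmul ℝ ℝ (E := ℝ) with hL
  set ψ := φ.normed volume with hψ
  set g := convolution ψ ρ L volume with hg
  have hcs : HasCompactSupport ψ := φ.hasCompactSupport_normed
  have hψd : ContDiff ℝ 1 ψ := φ.contDiff_normed
  have hloc : LocallyIntegrable ρ volume := hρ.continuous.locallyIntegrable
  have hex : ConvolutionExists ψ ρ L volume := hcs.convolutionExists_left L hψd.continuous hloc
  have hcs' : HasCompactSupport (fderiv ℝ ψ) := hcs.fderiv ℝ
  have hψ'c : Continuous (fderiv ℝ ψ) := hψd.continuous_fderiv one_ne_zero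
  have hex' : ConvolutionExists (fderiv ℝ ψ) ρ (L.precompL E) volume :=
    hcs'.convolutionExists_left _ hψ'c hloc
  have hder : ∀ x, HasFDerivAt g (convolution (fderiv ℝ ψ) ρ (L.precompL E) volume x) x :=
    fun x => hcs.hasFDerivAt_convolution_left L hψd hloc x
  have hρd : ∀ x y t, |ρ (x - t) - ρ (y - t)| ≤ ‖x - y‖ := fun x y t => by
    have := hρ.dist_le_mul (x - t) (y - t)
    rwa [Real.dist_eq, NNReal.coe_one, one_mul, dist_sub_right, dist_eq_norm] at this
  have hψi : Integrable ψ volume := hψd.continuous.integrable_of_hasCompactSupport hcs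
  have hψ'i : Integrable (fderiv ℝ ψ) volume := hψ'c.integrable_of_hasCompactSupport hcs'
  have hlip : LipschitzWith 1 g := LipschitzWith.of_dist_le_mul fun x y => by
    rw [NNReal.coe_one, one_mul, Real.dist_eq, hg, convolution, convolution,
      ← integral_sub (hex x) (hex y), dist_eq_norm, ← Real.norm_eq_abs]
    calc _ ≤ ∫ t, ψ t * ‖x - y‖ := by
          refine norm_integral_le_of_norm_le (hψi.mul_const _) (ae_of_all _ fun t => ?_)
          simp only [hL, ContinuousLinearMap.lsmul_apply, smul_eq_mul]
          rw [← mul_sub, norm_mul, Real.norm_of_nonneg (φ.nonneg_normed t), Real.norm_eq_abs]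
          exact mul_le_mul_of_nonneg_left (hρd x y t) (φ.nonneg_normed t)
      _ = _ := by rw [integral_mul_const, φ.integral_normed, one_mul]
  refine ⟨g, convolution (fderiv ℝ ψ) ρ (L.precompL E) volume,
    ∫ t, ‖fderiv ℝ ψ t‖, integral_nonneg fun _ => norm_nonneg _, hder, fun x => ?_, fun x y => ?_,
    fun x => ?_⟩
  · simpa using (hder x).le_of_lipschitz hlip
  · rw [convolution, convolution, ← integral_sub (hex' x) (hex' y)]
    calc _ ≤ ∫ t, ‖fderiv ℝ ψ t‖ * ‖x - y‖ := by
          refine norm_integral_le_of_norm_le (hψ'i.norm.mul_const _) (ae_of_all _ fun t => ?_)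
          rw [← map_sub]
          refine ContinuousLinearMap.opNorm_le_bound _ (by positivity) fun v => ?_
          rw [ContinuousLinearMap.precompL_apply, hL, ContinuousLinearMap.lsmul_apply,
            smul_eq_mul, norm_mul]
          calc _ ≤ ‖fderiv ℝ ψ t‖ * ‖v‖ * ‖x - y‖ := by
                gcongr
                · exact ContinuousLinearMap.le_opNorm _ _
                · exact hρd x y t
            _ = _ := by ring
      _ = _ := by rw [integral_mul_const]
  · rw [← Real.dist_eq]
    refine φ.dist_normed_convolution_le hρ.continuous.aestronglyMeasurable fun y hy => ?_
    have := hρ.dist_le_mul y x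
    rw [NNReal.coe_one, one_mul] at this
    exact this.trans (Metric.mem_ball.1 hy).le

lemma sum_sq_apply_single_le {d : ℕ} (f : EuclideanSpace ℝ (Fin d) →L[ℝ] ℝ) :
    ∑ j, f (EuclideanSpace.single j 1) ^ 2 ≤ ‖f‖ ^ 2 := by
  set v := (InnerProductSpace.toDual ℝ (EuclideanSpace ℝ (Fin d))).symm f with hv
  have h : ∀ j, f (EuclideanSpace.single j 1) = v j := fun j => by
    rw [← InnerProductSpace.toDual_symm_apply, ← hv, EuclideanSpace.inner_single_right]
    simp
  have hn : ‖f‖ = ‖v‖ := by rw [hv, LinearIsometryEquiv.norm_map]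
  rw [hn, EuclideanSpace.real_norm_sq_eq]
  simp [h]

lemma abs_sub_sub_le_of_lipschitz_fderiv {E : Type*} [NormedAddCommGroup E] [NormedSpace ℝ E]
    {g : E → ℝ} {g' : E → E →L[ℝ] ℝ} {C : ℝ} (hg : ∀ x, HasFDerivAt g (g' x) x) (hC : 0 ≤ C)
    (hlip : ∀ x y, ‖g' x - g' y‖ ≤ C * ‖x - y‖) (x v : E) :
    |g (x + v) - g x - g' x v| ≤ C * ‖v‖ ^ 2 := by
  have := Convex.norm_image_sub_le_of_norm_hasFDerivWithin_le' (f := g) (f' := g') (φ := g' x)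
    (C := C * ‖v‖) (s := Metric.closedBall x ‖v‖) (x := x) (y := x + v)
    (fun z _ => (hg z).hasFDerivWithinAt)
    (fun z hz => (hlip z x).trans (by
      rw [← dist_eq_norm]; exact mul_le_mul_of_nonneg_left hz hC))
    (convex_closedBall _ _) (Metric.mem_closedBall_self (norm_nonneg _)) (by simp)
  rw [add_sub_cancel_left, Real.norm_eq_abs] at this
  linarith [this, sq ‖v‖, mul_assoc C ‖v‖ ‖v‖]

lemma hasDerivAt_integral_Phi {α : Type*} [MeasurableSpace α] {μ : Measure α}
    [IsProbabilityMeasure μ] {g : α → ℝ} (hg : Measurable g) (l s : ℝ) :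
    HasDerivAt (fun s => ∫ z, Phi (l * (s - g z)) ∂μ) (∫ z, l * gaussPdf (l * (s - g z)) ∂μ) s := by
  have hm : ∀ t, Measurable fun z => l * (t - g z) := fun t => (measurable_const.sub hg).const_mul l
  refine (hasDerivAt_integral_of_dominated_loc_of_deriv_le (s := univ) (bound := fun _ => |l|)
    (F' := fun t z => l * gaussPdf (l * (t - g z)))
    Filter.univ_mem
    (Eventually.of_forall fun t => (continuous_Phi.measurable.comp (hm t)).aestronglyMeasurable)
    (Integrable.of_bound (continuous_Phi.measurable.comp (hm s)).aestronglyMeasurable 1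
      (ae_of_all _ fun z => by
        rw [Function.comp_apply, Real.norm_eq_abs, abs_of_pos (Phi_pos _)]
        exact (Phi_lt_one _).le))
    ((continuous_gaussPdf.measurable.comp (hm s)).const_mul l).aestronglyMeasurable
    (ae_of_all _ fun z t _ => ?_) (integrable_const _) (ae_of_all _ fun z t _ => ?_)).2
  · rw [norm_mul, Real.norm_eq_abs, Real.norm_eq_abs, abs_of_pos (gaussPdf_pos _)]
    exact mul_le_of_le_one_right (abs_nonneg l) (gaussPdf_le_one _)
  · refine ((hasDerivAt_Phi (l * (t - g z))).comp t
      (((hasDerivAt_id t).sub_const (g z)).const_mul l)).congr_deriv ?_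
    simp [mul_comm]

lemma PhiInv_integral_Phi_add_le {d : ℕ} {g : EuclideanSpace ℝ (Fin d) → ℝ}
    {g' : EuclideanSpace ℝ (Fin d) → EuclideanSpace ℝ (Fin d) →L[ℝ] ℝ} {C : ℝ}
    (hg : ∀ x, HasFDerivAt g (g' x) x) (hC : 0 ≤ C) (hg' : ∀ x, ‖g' x‖ ≤ 1)
    (hlip : ∀ x y, ‖g' x - g' y‖ ≤ C * ‖x - y‖) {l : ℝ} (hl : 0 ≤ l) {a b : ℝ} (hab : a ≤ b) :
    PhiInv (∫ z, Phi (l * (a - g z)) ∂ProbabilityTheory.stdGaussian (EuclideanSpace ℝ (Fin d))) +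
        l / Real.sqrt (1 + l ^ 2) * (b - a) ≤
      PhiInv (∫ z, Phi (l * (b - g z))
        ∂ProbabilityTheory.stdGaussian (EuclideanSpace ℝ (Fin d))) := by
  set μ := ProbabilityTheory.stdGaussian (EuclideanSpace ℝ (Fin d))
  have hgc : Continuous g := continuous_iff_continuousAt.2 fun x => (hg x).continuousAt
  have hmem : ∀ s, ∫ z, Phi (l * (s - g z)) ∂μ ∈ Ioo (0 : ℝ) 1 := fun s =>
    integral_Phi_mem_Ioo ((measurable_const.sub hgc.measurable).const_mul l)
  have hd := fun s => (hasDerivAt_PhiInv (hmem s)).comp s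
    (hasDerivAt_integral_Phi (μ := μ) hgc.measurable l s)
  have hbob : ∀ s, gaussProfile (∫ z, Phi (l * (s - g z)) ∂μ) ≤
      Real.sqrt (1 + l ^ 2) * ∫ z, gaussPdf (l * (s - g z)) ∂μ := fun s =>
    gaussProfile_stdGaussian_le (a := fun x j => l * g' x (EuclideanSpace.single j 1))
      (L := l) (C := l * C) (by fun_prop) hl (by positivity)
      (fun x => by
        simp only [mul_pow, ← Finset.mul_sum]
        refine mul_le_of_le_one_right (sq_nonneg l) ((sum_sq_apply_single_le _).trans ?_)
        exact pow_le_one₀ (norm_nonneg _) (hg' x))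
      (fun x j δ => by
        have h1 := abs_sub_sub_le_of_lipschitz_fderiv hg hC hlip x
          (δ • EuclideanSpace.single j (1 : ℝ))
        rw [norm_smul, PiLp.norm_single, norm_one, mul_one, Real.norm_eq_abs, sq_abs,
          map_smul, smul_eq_mul] at h1
        set w := g' x (EuclideanSpace.single j (1 : ℝ))
        set u := g (x + δ • EuclideanSpace.single j (1 : ℝ))
        have e : l * (s - u) - l * (s - g x) = -(l * ((u - g x - δ * w) + δ * w)) := by ring
        rw [e, abs_neg, abs_mul, abs_mul, abs_of_nonneg hl]
        have h2 := abs_add_le (u - g x - δ * w) (δ * w)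
        rw [abs_mul δ w] at h2
        have h3 := mul_le_mul_of_nonneg_left (h2.trans (add_le_add_left h1 _)) hl
        linarith)
  have hmono : Monotone fun s => PhiInv (∫ z, Phi (l * (s - g z)) ∂μ) -
      l / Real.sqrt (1 + l ^ 2) * s := by
    refine monotone_of_hasDerivAt_nonneg (fun s => (hd s).sub
      ((hasDerivAt_id s).const_mul (l / Real.sqrt (1 + l ^ 2)))) fun s => ?_
    have h1 := hbob s
    have h2 := gaussProfile_pos (∫ z, Phi (l * (s - g z)) ∂μ)
    have h3 : 0 < Real.sqrt (1 + l ^ 2) := Real.sqrt_pos.2 (by positivity)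
    simp only [Pi.zero_apply]
    rw [mul_one, sub_nonneg, integral_const_mul, div_le_iff₀ h3, inv_mul_eq_div, div_mul_eq_mul_div,
      le_div_iff₀ h2]
    nlinarith [mul_le_mul_of_nonneg_left h1 hl]
  have := hmono hab
  simp only at this
  linarith

/-- The Gaussian isoperimetric inequality. -/
lemma Phi_add_le_stdGaussian_infDist_le {d : ℕ} {A : Set (EuclideanSpace ℝ (Fin d))}
    (hA : MeasurableSet A)
    (hp : (ProbabilityTheory.stdGaussian (EuclideanSpace ℝ (Fin d))).real A ∈ Ioo (0 : ℝ) 1)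
    {η : ℝ} (hη : 0 < η) :
    Phi (PhiInv ((ProbabilityTheory.stdGaussian (EuclideanSpace ℝ (Fin d))).real A) + η) ≤
      (ProbabilityTheory.stdGaussian (EuclideanSpace ℝ (Fin d))).real
        {z | Metric.infDist z A ≤ η} := by
  set μ := ProbabilityTheory.stdGaussian (EuclideanSpace ℝ (Fin d))
  set p := μ.real A with hpdef
  set ρ : EuclideanSpace ℝ (Fin d) → ℝ := fun z => Metric.infDist z A with hρdef
  have hρ : LipschitzWith 1 ρ := Metric.lipschitz_infDist_pt A
  have hset : MeasurableSet {z | ρ z ≤ η} := measurableSet_le hρ.continuous.measurable measurable_const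
  have hPhi_int : ∀ h : EuclideanSpace ℝ (Fin d) → ℝ, Measurable h →
      Integrable (fun z => Phi (h z)) μ := fun h hm =>
    Integrable.of_bound (continuous_Phi.measurable.comp hm).aestronglyMeasurable 1
      (ae_of_all _ fun z => by
        rw [Real.norm_eq_abs, abs_of_pos (Phi_pos _)]; exact (Phi_lt_one _).le)
  let F : ℕ → EuclideanSpace ℝ (Fin d) → ℝ := fun n z =>
    if ρ z ≤ η then 1 else Phi ((n : ℝ) * (n * (η - ρ z) + 1))
  have hFm : ∀ n, Measurable (F n) := fun n =>
    Measurable.ite hset measurable_const (continuous_Phi.comp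
      (by fun_prop (disch := exact hρ.continuous) :
        Continuous fun z => (n : ℝ) * (n * (η - ρ z) + 1))).measurable
  have hFb : ∀ n z, ‖F n z‖ ≤ 1 := fun n z => by
    simp only [F]
    split_ifs
    · simp
    · rw [Real.norm_eq_abs, abs_of_pos (Phi_pos _)]; exact (Phi_lt_one _).le
  have hFlim : Tendsto (fun n => ∫ z, F n z ∂μ) atTop (𝓝 (μ.real {z | ρ z ≤ η})) := by
    rw [← integral_indicator_one hset]
    refine tendsto_integral_of_dominated_convergence (fun _ => 1)
      (fun n => (hFm n).aestronglyMeasurable) (integrable_const _)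
      (fun n => ae_of_all _ (hFb n)) (ae_of_all _ fun z => ?_)
    by_cases hz : ρ z ≤ η
    · simp [F, hz]
    · simp only [F, hz, if_false, indicator_of_notMem, mem_ofPred_eq, not_false_eq_true]
      refine tendsto_Phi_atBot.comp ?_
      have hn := tendsto_natCast_atTop_atTop (R := ℝ)
      refine hn.atTop_mul_atBot₀ (tendsto_atBot_add_const_right _ _ ?_)
      exact hn.atTop_mul_const_of_neg (by linarith [not_le.1 hz])
  have hPn := tendsto_Phi_atTop.comp (tendsto_natCast_atTop_atTop (R := ℝ))
  have hlow : Tendsto (fun n : ℕ => Phi (PhiInv (Phi (n : ℝ) * p) +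
      (1 - 1 / ((n : ℝ) + 1)) * (η - 2 * (n : ℝ)⁻¹))) atTop (𝓝 (Phi (PhiInv p + η))) := by
    refine (continuous_Phi.tendsto _).comp (Tendsto.add ?_ ?_)
    · refine (continuousAt_PhiInv hp).tendsto.comp ?_
      simpa using hPn.mul_const p
    · simpa using (tendsto_one_div_add_atTop_nhds_zero_nat.const_sub (1 : ℝ)).mul
        ((((tendsto_inv_atTop_nhds_zero_nat (𝕜 := ℝ)).const_mul 2)).const_sub η)
  refine le_of_tendsto_of_tendsto hlow hFlim ?_
  have hη2 : ∀ᶠ n : ℕ in atTop, 2 * (n : ℝ)⁻¹ < η := by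
    have := (tendsto_inv_atTop_nhds_zero_nat (𝕜 := ℝ)).const_mul 2
    rw [mul_zero] at this
    exact this.eventually (gt_mem_nhds hη)
  filter_upwards [hη2, eventually_gt_atTop 0] with n hn hn0
  have hn1 : (1 : ℝ) ≤ n := by exact_mod_cast hn0
  have hnpos : (0 : ℝ) < n := by linarith
  obtain ⟨g, g', C, hC, hg, hg', hlip, happ⟩ :=
    exists_smooth_approx_of_lipschitz hρ (inv_pos.2 hnpos)
  have hgm : Measurable g :=
    (continuous_iff_continuousAt.2 fun x => (hg x).continuousAt).measurable
  have hm : ∀ s, Measurable fun z => (n : ℝ) ^ 2 * (s - g z) := fun s =>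
    (measurable_const.sub hgm).const_mul _
  have hgrow := PhiInv_integral_Phi_add_le hg hC hg' hlip (sq_nonneg (n : ℝ)) hn.le
  have hI : Phi n * p ≤ ∫ z, Phi ((n : ℝ) ^ 2 * (2 * (n : ℝ)⁻¹ - g z)) ∂μ := by
    calc Phi n * p = ∫ z, A.indicator (fun _ => Phi n) z ∂μ := by
          rw [integral_indicator_const _ hA, smul_eq_mul, mul_comm]
      _ ≤ _ := by
          refine integral_mono ((integrable_const _).indicator hA) (hPhi_int _ (hm _)) fun z => ?_
          by_cases hz : z ∈ A
          · rw [indicator_of_mem hz]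
            refine Phi_strictMono.monotone ?_
            have h1 := happ z
            rw [show ρ z = 0 from Metric.infDist_zero_of_mem hz, sub_zero] at h1
            have h2 : (n : ℝ)⁻¹ ≤ 2 * (n : ℝ)⁻¹ - g z := by linarith [le_of_abs_le h1]
            calc (n : ℝ) = n ^ 2 * (n : ℝ)⁻¹ := by field_simp
              _ ≤ _ := by gcongr
          · rw [indicator_of_notMem hz]; exact (Phi_pos _).le
  have hpn : Phi n * p ∈ Ioo (0 : ℝ) 1 :=
    ⟨mul_pos (Phi_pos _) hp.1, mul_lt_one_of_nonneg_of_lt_one_left (Phi_pos _).le (Phi_lt_one _)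
      hp.2.le⟩
  have hJmem := integral_Phi_mem_Ioo (μ := μ) (hm η)
  have hmon := PhiInv_strictMonoOn.monotoneOn hpn
    (integral_Phi_mem_Ioo (μ := μ) (hm (2 * (n : ℝ)⁻¹))) hI
  have hcoef : 1 - 1 / ((n : ℝ) + 1) ≤ (n : ℝ) ^ 2 / Real.sqrt (1 + ((n : ℝ) ^ 2) ^ 2) := by
    have h1 : Real.sqrt (1 + ((n : ℝ) ^ 2) ^ 2) ≤ 1 + (n : ℝ) ^ 2 :=
      Real.sqrt_le_iff.2 ⟨by positivity, by nlinarith [sq_nonneg (n : ℝ)]⟩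
    have h2 : 0 < Real.sqrt (1 + ((n : ℝ) ^ 2) ^ 2) := Real.sqrt_pos.2 (by positivity)
    calc 1 - 1 / ((n : ℝ) + 1) = n / (n + 1) := by field_simp; ring
      _ ≤ (n : ℝ) ^ 2 / (1 + (n : ℝ) ^ 2) := by
          rw [div_le_div_iff₀ (by positivity) (by positivity)]
          nlinarith
      _ ≤ _ := by gcongr
  have hJ : ∫ z, Phi ((n : ℝ) ^ 2 * (η - g z)) ∂μ ≤ ∫ z, F n z ∂μ := by
    refine integral_mono (hPhi_int _ (hm _))
      (Integrable.of_bound (hFm n).aestronglyMeasurable 1 (ae_of_all _ (hFb n))) fun z => ?_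
    simp only [F]
    split_ifs with hz
    · exact (Phi_lt_one _).le
    · refine Phi_strictMono.monotone ?_
      have h2 : η - g z ≤ η - ρ z + (n : ℝ)⁻¹ := by linarith [neg_le_of_abs_le (happ z)]
      calc (n : ℝ) ^ 2 * (η - g z) ≤ n ^ 2 * (η - ρ z + (n : ℝ)⁻¹) := by gcongr
        _ = _ := by field_simp
  refine le_trans ?_ hJ
  rw [← Phi_PhiInv hJmem]
  refine Phi_strictMono.monotone (le_trans ?_ hgrow)
  have := mul_le_mul_of_nonneg_right hcoef (sub_nonneg.2 hn.le)
  linarith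

lemma gaussPdf_add (t η : ℝ) :
    gaussPdf (t + η) = gaussPdf t * (Real.exp (-η ^ 2 / 2) * Real.exp (-η * t)) := by
  rw [gaussPdf, gaussPdf, mul_assoc, ← Real.exp_add, ← Real.exp_add]
  ring_nf

lemma one_sub_Phi_add_le (t : ℝ) {η : ℝ} (hη : 0 < η) :
    1 - Phi (t + η) ≤ Real.exp (-η ^ 2 / 2) * Real.exp (-η * t) * (1 - Phi t) := by
  have hexp : ∀ t, HasDerivAt (fun t => Real.exp (-η * t)) (Real.exp (-η * t) * (-η)) t :=
    fun t => by simpa using ((hasDerivAt_id t).const_mul (-η)).exp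
  have hd : ∀ t, HasDerivAt
      (fun t => Real.exp (-η ^ 2 / 2) * Real.exp (-η * t) * (1 - Phi t) - (1 - Phi (t + η)))
      (-(η * (Real.exp (-η ^ 2 / 2) * Real.exp (-η * t) * (1 - Phi t)))) t := fun t => by
    refine ((((hexp t).const_mul _).mul ((hasDerivAt_Phi t).const_sub 1)).sub
      (((hasDerivAt_Phi (t + η)).comp_add_const t η).const_sub 1)).congr_deriv ?_
    rw [gaussPdf_add]; ring
  have hanti := antitone_of_hasDerivAt_nonpos hd fun t => by
    have := Phi_lt_one t
    have : 0 ≤ 1 - Phi t := by linarith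
    simp only [Pi.zero_apply, Left.neg_nonpos_iff]
    positivity
  have hlim : Tendsto
      (fun t => Real.exp (-η ^ 2 / 2) * Real.exp (-η * t) * (1 - Phi t) - (1 - Phi (t + η)))
      atTop (𝓝 0) := by
    have h1 : Tendsto (fun t => Real.exp (-η * t)) atTop (𝓝 0) :=
      Real.tendsto_exp_atBot.comp (tendsto_id.const_mul_atTop_of_neg (by linarith))
    have h2 := tendsto_Phi_atTop.comp (tendsto_atTop_add_const_right atTop η tendsto_id)
    simpa using ((h1.const_mul (Real.exp (-η ^ 2 / 2))).mul (tendsto_Phi_atTop.const_sub 1)).sub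
      (h2.const_sub 1)
  have := hanti.le_of_tendsto hlim t
  linarith

/-- The Birnbaum lower bound for the Gaussian tail. -/
lemma gaussPdf_mul_le_one_sub_Phi (s : ℝ) :
    gaussPdf s * ((Real.sqrt (s ^ 2 + 4) - s) / 2) ≤ 1 - Phi s := by
  have hR : ∀ u : ℝ, 0 < Real.sqrt (u ^ 2 + 4) := fun u => Real.sqrt_pos.2 (by positivity)
  have hR2 : ∀ u : ℝ, Real.sqrt (u ^ 2 + 4) ^ 2 = u ^ 2 + 4 := fun u =>
    Real.sq_sqrt (by positivity)
  have hRd : ∀ u : ℝ, HasDerivAt (fun u : ℝ => Real.sqrt (u ^ 2 + 4))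
      (u / Real.sqrt (u ^ 2 + 4)) u := fun u => by
    refine (((hasDerivAt_pow 2 u).add_const 4).sqrt (by positivity)).congr_deriv ?_
    have := (hR u).ne'
    field_simp
    norm_num
  have hd : ∀ u, HasDerivAt
      (fun u => 1 - Phi u - gaussPdf u * ((Real.sqrt (u ^ 2 + 4) - u) / 2)) _ u := fun u =>
    ((hasDerivAt_Phi u).const_sub 1).sub
      ((hasDerivAt_gaussPdf u).mul (((hRd u).sub (hasDerivAt_id u)).div_const 2))
  have hanti := antitone_of_hasDerivAt_nonpos hd fun u => by
    have h1 := hR u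
    have h2 := hR2 u
    set R := Real.sqrt (u ^ 2 + 4)
    have h3 : u * R ≤ u ^ 2 + 2 := by
      refine abs_le_of_sq_le_sq' ?_ (by positivity) |>.2
      rw [mul_pow, h2]; nlinarith
    have h4 : 0 ≤ R - u := by
      have : u ≤ R := abs_le_of_sq_le_sq' (by linarith) h1.le |>.2
      linarith
    have e : -gaussPdf u - (-u * gaussPdf u * ((R - u) / 2) + gaussPdf u * ((u / R - 1) / 2)) =
        -(gaussPdf u * (R - u) * (u ^ 2 + 2 - u * R)) / (4 * R) := by
      field_simp
      linear_combination 2 * gaussPdf u * u * h2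
    simp only [Pi.zero_apply]
    rw [e]
    have := gaussPdf_pos u
    have h5 : 0 ≤ u ^ 2 + 2 - u * R := by linarith
    have : 0 ≤ (gaussPdf u * (R - u) * (u ^ 2 + 2 - u * R)) / (4 * R) := by positivity
    rw [neg_div]; linarith
  have hlim : Tendsto (fun u => 1 - Phi u - gaussPdf u * ((Real.sqrt (u ^ 2 + 4) - u) / 2))
      atTop (𝓝 0) := by
    have h1 : Tendsto (fun u => gaussPdf u * ((Real.sqrt (u ^ 2 + 4) - u) / 2)) atTop (𝓝 0) := by
      refine squeeze_zero' ?_ ?_ tendsto_inv_atTop_zero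
      · refine Eventually.of_forall fun u => ?_
        have h : u ≤ Real.sqrt (u ^ 2 + 4) := Real.le_sqrt_of_sq_le (by linarith)
        exact mul_nonneg (gaussPdf_pos u).le (by linarith)
      · filter_upwards [eventually_gt_atTop 0] with u hu
        have h : Real.sqrt (u ^ 2 + 4) ≤ u + 2 := Real.sqrt_le_iff.2 ⟨by linarith, by nlinarith⟩
        have h' := abs_mul_gaussPdf_le_one u
        rw [abs_of_pos hu] at h'
        have h'' : gaussPdf u ≤ u⁻¹ := by
          rw [← one_div, le_div_iff₀ hu]; linarith
        have := gaussPdf_pos u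
        nlinarith
    simpa using (tendsto_Phi_atTop.const_sub 1).sub h1
  have := hanti.le_of_tendsto hlim s
  linarith

lemma sqrt_log_le_PhiInv {k : ℝ} (hk : 5 ≤ k) :
    Real.sqrt (Real.log (k ^ 2 / (4 * π * Real.log k))) ≤ PhiInv (1 - 1 / k) := by
  have hk0 : 0 < k := by linarith
  have hpi := Real.pi_gt_three
  have hpi' : π < 63 / 20 := Real.pi_lt_d2.trans_eq (by norm_num)
  have he := Real.exp_one_gt_d9
  have he' := Real.exp_one_lt_d9
  have hexp2 : Real.exp 2 = Real.exp 1 ^ 2 := by rw [← Real.exp_nat_mul]; norm_num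
  set L := Real.log k with hL
  have hL1 : 1 ≤ L := (Real.le_log_iff_exp_le hk0).2 (by linarith)
  have hL2 : L ≤ 1 + k / 7 := by
    have h1 := Real.log_le_sub_one_of_pos (x := k / Real.exp 2) (by positivity)
    rw [Real.log_div hk0.ne' (Real.exp_pos 2).ne', Real.log_exp] at h1
    have h2 : k / Real.exp 2 ≤ k / 7 :=
      div_le_div_of_nonneg_left hk0.le (by norm_num) (by rw [hexp2]; nlinarith)
    linarith
  have hA : 0 < 4 * π * L := by positivity
  have harg : 1 ≤ k ^ 2 / (4 * π * L) := by
    rw [one_le_div hA]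
    calc 4 * π * L ≤ 4 * (63 / 20) * (1 + k / 7) := by gcongr
      _ ≤ 5 * k := by linarith
      _ ≤ k ^ 2 := by nlinarith
  set s := Real.sqrt (Real.log (k ^ 2 / (4 * π * L))) with hs
  have hs0 : 0 ≤ s := Real.sqrt_nonneg _
  have hs2 : s ^ 2 = 2 * L - Real.log (4 * π * L) := by
    rw [hs, Real.sq_sqrt (Real.log_nonneg harg), Real.log_div (by positivity) hA.ne',
      Real.log_pow]
    norm_num [hL]
  set w := Real.sqrt (2 * L) with hw
  have hw2 : w ^ 2 = 2 * L := Real.sq_sqrt (by linarith)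
  have hw1 : 1 ≤ w := Real.one_le_sqrt.2 (by linarith)
  have hw0 : 0 < w := by linarith
  have hpdf : gaussPdf s = w / k := by
    have h1 : Real.exp (-s ^ 2 / 2) = Real.sqrt (4 * π * L) / k := by
      rw [hs2, show -(2 * L - Real.log (4 * π * L)) / 2 = Real.log (4 * π * L) / 2 - L by ring,
        Real.exp_sub, hL, Real.exp_log hk0, ← hL, Real.exp_half, Real.exp_log hA]
    rw [gaussPdf, h1, show 4 * π * L = (2 * π) * (2 * L) by ring,
      Real.sqrt_mul (show 0 ≤ 2 * π by positivity) (2 * L)]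
    have : Real.sqrt (2 * π) ≠ 0 := (Real.sqrt_pos.2 (by positivity)).ne'
    rw [← hw, mul_div_assoc, inv_mul_cancel_left₀ this]
  have hlog : 2 ≤ Real.log (4 * π * L) := by
    rw [Real.le_log_iff_exp_le hA, hexp2]
    nlinarith
  have hsw : s ≤ w - w⁻¹ := by
    have hi : w⁻¹ ≤ 1 := inv_le_one_of_one_le₀ hw1
    refine abs_le_of_sq_le_sq' ?_ (by linarith) |>.2
    have e : (w - w⁻¹) ^ 2 = w ^ 2 - 2 + w⁻¹ ^ 2 := by field_simp; ring
    rw [e, hs2, hw2]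
    nlinarith [sq_nonneg w⁻¹]
  have hroot : s + 2 * w⁻¹ ≤ Real.sqrt (s ^ 2 + 4) := by
    refine Real.le_sqrt_of_sq_le ?_
    have h1 := mul_le_mul_of_nonneg_right hsw (inv_pos.2 hw0).le
    rw [sub_mul, mul_inv_cancel₀ hw0.ne'] at h1
    nlinarith
  have htail : 1 / k ≤ 1 - Phi s := by
    refine le_trans ?_ (gaussPdf_mul_le_one_sub_Phi s)
    rw [hpdf]
    calc 1 / k = w / k * (2 * w⁻¹ / 2) := by field_simp
      _ ≤ _ := by gcongr; linarith
  have hmem : 1 - 1 / k ∈ Ioo (0 : ℝ) 1 := by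
    have h1 : 0 < 1 / k := by positivity
    have h2 : 1 / k < 1 := by rw [div_lt_one hk0]; linarith
    exact ⟨by linarith, by linarith⟩
  rw [← Phi_strictMono.le_iff_le, Phi_PhiInv hmem]
  linarith

lemma distSet_eq_infDist {d : ℕ} (z : Fin d → ℝ) (A : Set (Fin d → ℝ)) :
    distSet z A = Metric.infDist (WithLp.toLp 2 z)
      ((WithLp.ofLp : EuclideanSpace ℝ (Fin d) → Fin d → ℝ) ⁻¹' A) := by
  rw [Metric.infDist_eq_iInf, distSet, iInf]
  congr 1
  ext t
  simp only [mem_ofPred_eq, mem_range, Subtype.exists, mem_preimage]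
  constructor
  · rintro ⟨y, hy, rfl⟩
    exact ⟨WithLp.toLp 2 y, hy, by simp [EuclideanSpace.dist_eq, l2, Real.dist_eq]⟩
  · rintro ⟨y, hy, rfl⟩
    exact ⟨y.ofLp, hy, by simp [EuclideanSpace.dist_eq, l2, Real.dist_eq]⟩

instance (d : ℕ) : IsProbabilityMeasure (_root_.stdGaussian d) := by
  unfold _root_.stdGaussian; infer_instance

lemma Phi_add_le_stdGaussian_distSet_le {d : ℕ} {A : Set (Fin d → ℝ)} (hA : MeasurableSet A)
    (hp : (_root_.stdGaussian d).real A ∈ Ioo (0 : ℝ) 1) {η : ℝ} (hη : 0 < η) :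
    MeasurableSet {z | distSet z A ≤ η} ∧
      Phi (PhiInv ((_root_.stdGaussian d).real A) + η) ≤
        (_root_.stdGaussian d).real {z | distSet z A ≤ η} := by
  set A' := (WithLp.ofLp : EuclideanSpace ℝ (Fin d) → Fin d → ℝ) ⁻¹' A
  have hto : Measurable (WithLp.toLp 2 : (Fin d → ℝ) → EuclideanSpace ℝ (Fin d)) :=
    WithLp.measurable_toLp 2 _
  have hA' : MeasurableSet A' := WithLp.measurable_ofLp 2 _ hA
  have hmap : ∀ S, MeasurableSet S →
      (ProbabilityTheory.stdGaussian (EuclideanSpace ℝ (Fin d))).real S =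
        (_root_.stdGaussian d).real (WithLp.toLp 2 ⁻¹' S) := fun S hS => by
    rw [← map_pi_eq_stdGaussian, map_measureReal_apply hto hS]
    rfl
  have hS : MeasurableSet {z : EuclideanSpace ℝ (Fin d) | Metric.infDist z A' ≤ η} :=
    measurableSet_le measurable_infDist measurable_const
  have hSeq : {z | distSet z A ≤ η} =
      WithLp.toLp 2 ⁻¹' {z : EuclideanSpace ℝ (Fin d) | Metric.infDist z A' ≤ η} := by
    ext z
    rw [mem_preimage, mem_ofPred_eq, mem_ofPred_eq, distSet_eq_infDist]
  have hAA : (ProbabilityTheory.stdGaussian (EuclideanSpace ℝ (Fin d))).real A' =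
      (_root_.stdGaussian d).real A := hmap A' hA'
  rw [hSeq, ← hmap _ hS, ← hAA]
  exact ⟨hto hS, Phi_add_le_stdGaussian_infDist_le hA' (by rwa [hAA]) hη⟩

/-- For an equiprobable Gaussian partition into `K ≥ 5` cells, most points are within
ℓ₂-distance `η` of the complement of their own cell. -/
theorem partition_boundary_measure_equiprobable (d K : ℕ) (hK : 5 ≤ K)
    (B : Fin K → Set (Fin d → ℝ))
    (hmeas : ∀ i, MeasurableSet (B i))
    (hdisj : Pairwise (Function.onFun Disjoint B))
    (hcover : (⋃ i, B i) = Set.univ)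
    (hprob : ∀ i, ((stdGaussian d) (B i)).toReal = 1 / (K : ℝ))
    (η : ℝ) (hη : 1 ≤ η) :
    ((stdGaussian d) {z | ∃ i, z ∈ B i ∧ distSet z (B i)ᶜ ≤ η}).toReal ≥
      1 - Real.sqrt (π / 2) * Real.exp (-η ^ 2 / 2) *
        Real.exp (-η * Real.sqrt (Real.log ((K : ℝ) ^ 2 / (4 * π * Real.log K)))) := by
  have hK0 : (0 : ℝ) < K := by exact_mod_cast (by omega : 0 < K)
  have hK5 : (5 : ℝ) ≤ K := by exact_mod_cast hK
  have hη0 : 0 < η := by linarith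
  set t := PhiInv (1 - 1 / (K : ℝ)) with ht
  have hmem : 1 - 1 / (K : ℝ) ∈ Ioo (0 : ℝ) 1 := by
    have h1 : 0 < 1 / (K : ℝ) := by positivity
    have h2 : 1 / (K : ℝ) < 1 := by rw [div_lt_one hK0]; linarith
    exact ⟨by linarith, by linarith⟩
  set c := Real.exp (-η ^ 2 / 2) * Real.exp (-η * t) with hc
  have hcell : ∀ i, (stdGaussian d).real {z | distSet z (B i)ᶜ ≤ η}ᶜ ≤ c * (1 / K) := fun i => by
    have hcompl : (stdGaussian d).real (B i)ᶜ = 1 - 1 / K := by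
      rw [probReal_compl_eq_one_sub (hmeas i), measureReal_def, hprob i]
    obtain ⟨hm, h⟩ := Phi_add_le_stdGaussian_distSet_le (hmeas i).compl (by rwa [hcompl]) hη0
    rw [hcompl, ← ht] at h
    rw [probReal_compl_eq_one_sub hm]
    have h2 := one_sub_Phi_add_le t hη0
    rw [← hc, ht, Phi_PhiInv hmem, ← ht, sub_sub_cancel] at h2
    linarith
  set T := {z | ∃ i, z ∈ B i ∧ distSet z (B i)ᶜ ≤ η} with hT
  have hcompl : (stdGaussian d).real Tᶜ ≤ c := by
    calc (stdGaussian d).real Tᶜ ≤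
          (stdGaussian d).real (⋃ i, {z | distSet z (B i)ᶜ ≤ η}ᶜ) := by
          refine measureReal_mono fun z hz => ?_
          obtain ⟨i, hi⟩ := mem_iUnion.1 (hcover ▸ mem_univ z)
          exact mem_iUnion.2 ⟨i, fun hd => hz ⟨i, hi, hd⟩⟩
      _ ≤ ∑ i, (stdGaussian d).real {z | distSet z (B i)ᶜ ≤ η}ᶜ := measureReal_iUnion_fintype_le _
      _ ≤ ∑ _i : Fin K, c * (1 / K) := Finset.sum_le_sum fun i _ => hcell i
      _ = c := by
          simp only [Finset.sum_const, Finset.card_univ, Fintype.card_fin, nsmul_eq_mul]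
          field_simp
  have htotal : 1 ≤ (stdGaussian d).real T + (stdGaussian d).real Tᶜ := by
    have := measureReal_union_le (μ := stdGaussian d) T Tᶜ
    rwa [union_compl_self, probReal_univ] at this
  have hcle : c ≤ Real.sqrt (π / 2) * Real.exp (-η ^ 2 / 2) *
      Real.exp (-η * Real.sqrt (Real.log ((K : ℝ) ^ 2 / (4 * π * Real.log K)))) := by
    have h1 : 1 ≤ Real.sqrt (π / 2) := Real.one_le_sqrt.2 (by linarith [Real.pi_gt_three])
    have h2 := sqrt_log_le_PhiInv hK5
    rw [hc]
    refine mul_le_mul (le_mul_of_one_le_left (Real.exp_pos _).le h1) (Real.exp_le_exp.2 ?_)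
      (Real.exp_pos _).le (by positivity)
    nlinarith
  rw [← measureReal_def]
  linarith
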